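/- arXiv:1701.01710 — 12 statements merged into one kernel-verified Lean document; each statement's English description precedes it below -/
import Mathlib

section
/- Let C be a nonempty, closed, convex subset of ℝⁿ, let F : ℝⁿ → ℝᵐ be continuously differentiable with Jacobian J_F, and let K assign to each x ∈ ℝⁿ a closed, pointed, convex cone K(x) ⊆ ℝᵐ with nonempty interior. If x* ∈ C is a weak solution of the problem K-min F(x) subject to x ∈ C, then x* is a stationary point. -/
/-! If the directional derivative along a feasible `d` lay in the open set `-int K(x*)`, so would
the difference quotients `t⁻¹ (F(x* + t d) - F(x*))` for small `t > 0`. The interior of a cone is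
stable under positive scaling, so `F(x* + t d) - F(x*)` would lie there too, while `x* + t d ∈ C`
for `t ≤ 1` by convexity: this contradicts weak optimality. -/

open scoped Pointwise RealInnerProductSpace

/-- The interior of a set closed under positive scaling is closed under positive scaling. -/
theorem smul_mem_interior_of_cone {E : Type*} [NormedAddCommGroup E] [NormedSpace ℝ E]
    {S : Set E} (hS : ∀ c : ℝ, 0 ≤ c → ∀ y ∈ S, c • y ∈ S) {t : ℝ} (ht : 0 < t) {y : E}
    (hy : y ∈ interior S) : t • y ∈ interior S := by
  have hsub : t • S ⊆ S := by
    rintro _ ⟨z, hz, rfl⟩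
    exact hS t ht.le z hz
  apply interior_mono hsub
  rw [interior_smul₀ ht.ne']
  exact Set.smul_mem_smul_set hy

/-- If `x*` is a weak solution of the constrained problem
`K-min F(x), x ∈ C` (with `C` nonempty closed convex, `F` continuously
differentiable, and `K x` closed pointed convex cones with nonempty interior),
then `x*` is a stationary point. -/
theorem stmt_0 {n m : ℕ}
    (C : Set (EuclideanSpace ℝ (Fin n)))
    (hCne : C.Nonempty) (hCcl : IsClosed C) (hCconv : Convex ℝ C)
    (F : EuclideanSpace ℝ (Fin n) → EuclideanSpace ℝ (Fin m))
    (hF : ContDiff ℝ 1 F)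
    (K : EuclideanSpace ℝ (Fin n) → Set (EuclideanSpace ℝ (Fin m)))
    (hKcl : ∀ x, IsClosed (K x))
    (hKcone : ∀ x, ∀ c : ℝ, 0 ≤ c → ∀ y ∈ K x, c • y ∈ K x)
    (hKconv : ∀ x, Convex ℝ (K x))
    (hKpointed : ∀ x, ∀ y, y ∈ K x → -y ∈ K x → y = 0)
    (hKint : ∀ x, (interior (K x)).Nonempty)
    (xs : EuclideanSpace ℝ (Fin n)) (hxs : xs ∈ C)
    (hweak : ∀ x ∈ C, F x - F xs ∉ -interior (K xs)) :
    ∀ d : EuclideanSpace ℝ (Fin n), xs + d ∈ C →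
      fderiv ℝ F xs d ∉ -interior (K xs) := by
  intro d hd hmem
  have hdiff : HasFDerivAt F (fderiv ℝ F xs) xs :=
    (hF.differentiable one_ne_zero xs).hasFDerivAt
  have hlim := (hdiff.hasLineDerivAt d).tendsto_slope_zero_right
  have hev := hlim.eventually (isOpen_interior.neg.mem_nhds hmem)
  have hlt : ∀ᶠ t : ℝ in nhdsWithin 0 (Set.Ioi 0), t ∈ Set.Ioo (0 : ℝ) 1 :=
    Ioo_mem_nhdsGT one_pos
  obtain ⟨t, ht, ht0, ht1⟩ := (hev.and hlt).exists
  refine hweak (xs + t • d) (hCconv.add_smul_mem hxs hd ⟨ht0.le, ht1.le⟩) ?_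
  have h := smul_mem_interior_of_cone (hKcone xs) ht0 (Set.mem_neg.1 ht)
  rw [smul_neg, smul_inv_smul₀ ht0.ne'] at h
  exact Set.mem_neg.2 h
end

section
/- Let C be a nonempty, closed, convex subset of ℝⁿ, let F : ℝⁿ → ℝᵐ be continuously differentiable, and let K be a point-to-cone mapping with closed graph such that each K(x) is a closed, pointed, convex cone with nonempty interior. Assume F is K-convex on C and satisfies the gradient inclusion F(x) − F(x̄) ∈ J_F(x̄)(x − x̄) + K(x̄) for all x, x̄ ∈ C. If x* ∈ C is such that for all d ∈ C − x*, J_F(x*)d ∉ −K(x*) \ {0}, then x* is a minimizer, i.e., for all x ∈ C, F(x) − F(x*) ∉ −K(x*) \ {0}. -/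
/-!
Write `F x - F xs = J d + k` with `d = x - xs` and `k ∈ K xs`, by the gradient inclusion. If
`F x - F xs` were a nonzero element of `-K xs`, then so would be `J d = (F x - F xs) - k`:
a convex cone is closed under addition, and `J d = 0` would put `F x - F xs` in
`K xs ∩ -K xs = {0}`. This contradicts stationarity at `xs`.
-/

open scoped Pointwise RealInnerProductSpace

/-- For a `K`-convex continuously differentiable `F` (with the
gradient inclusion) on a nonempty closed convex set `C`: if at `x* ∈ C` every
feasible direction `d ∈ C − x*` satisfies `J_F(x*)d ∉ −K(x*) \ {0}`, then `x*`
is a minimizer, i.e. `F(x) − F(x*) ∉ −K(x*) \ {0}` for all `x ∈ C`. -/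
theorem stmt_2 {n m : ℕ}
    (C : Set (EuclideanSpace ℝ (Fin n)))
    (hCne : C.Nonempty) (hCcl : IsClosed C) (hCconv : Convex ℝ C)
    (F : EuclideanSpace ℝ (Fin n) → EuclideanSpace ℝ (Fin m))
    (hF : ContDiff ℝ 1 F)
    (K : EuclideanSpace ℝ (Fin n) → Set (EuclideanSpace ℝ (Fin m)))
    (hKcl : ∀ x, IsClosed (K x))
    (hKcone : ∀ x, ∀ c : ℝ, 0 ≤ c → ∀ y ∈ K x, c • y ∈ K x)
    (hKconv : ∀ x, Convex ℝ (K x))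
    (hKpointed : ∀ x, ∀ y, y ∈ K x → -y ∈ K x → y = 0)
    (hKint : ∀ x, (interior (K x)).Nonempty)
    (hGraph : IsClosed {p : EuclideanSpace ℝ (Fin n) × EuclideanSpace ℝ (Fin m) |
      p.2 ∈ K p.1})
    (hKconvexF : ∀ lam : ℝ, lam ∈ Set.Icc (0 : ℝ) 1 → ∀ x ∈ C, ∀ xb ∈ C,
      ∃ k ∈ K (lam • x + (1 - lam) • xb),
        F (lam • x + (1 - lam) • xb) = lam • F x + (1 - lam) • F xb - k)
    (hGradIncl : ∀ x ∈ C, ∀ xb ∈ C,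
      F x - F xb - fderiv ℝ F xb (x - xb) ∈ K xb)
    (xs : EuclideanSpace ℝ (Fin n)) (hxs : xs ∈ C)
    (hstat : ∀ d : EuclideanSpace ℝ (Fin n), xs + d ∈ C →
      fderiv ℝ F xs d ∉ (-K xs) \ {0}) :
    ∀ x ∈ C, F x - F xs ∉ (-K xs) \ {0} := by
  rintro x hx ⟨hneg, hne⟩
  rw [Set.mem_neg] at hneg
  have hk := hGradIncl x hx xs hxs
  refine hstat (x - xs) (by simpa using hx) ⟨?_, fun h0 => hne ?_⟩
  · rw [Set.mem_neg]
    -- `-J d = -(F x - F xs) + k` with `k ∈ K xs`, and a convex cone is closed under addition: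
    -- the sum is twice the midpoint.
    have hmid := hKconv xs hneg hk (by norm_num : (0 : ℝ) ≤ 1 / 2)
      (by norm_num : (0 : ℝ) ≤ 1 / 2) (by norm_num)
    have hsum := hKcone xs 2 (by norm_num) _ hmid
    convert hsum using 1
    module
  · -- If `J d = 0`, then `F x - F xs` lies in both `K xs` and `-K xs`.
    rw [Set.mem_singleton_iff] at h0
    rw [h0, sub_zero] at hk
    exact hKpointed xs _ hk hneg
end

section
/- Let C be a nonempty, closed, convex subset of ℝⁿ, let F : ℝⁿ → ℝᵐ be continuously differentiable with Jacobian J_F, and for each x let K(x) ⊆ ℝᵐ be a closed, pointed, convex cone with nonempty interior, with G(x) a compact subset of K*(x) ∩ S(0,1) whose convex hull generates K*(x). Define φ(x,v) := max_{y ∈ G(x)} ⟨y, J_F(x)v⟩ and θ_β(x) := min_{v ∈ C − x} (‖v‖²/2 + β·φ(x,v)) for fixed β > 0. Then a point x ∈ C is a stationary point if and only if θ_β(x) = 0. -/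
/-!
For `w = J_F(x)v`, the sign of `φ(x,v) = max_{y ∈ G(x)} ⟨y,w⟩` detects membership in `-int K(x)`.
If `-w` is interior to `K(x)`, it can be moved by `-ε y` without leaving `K(x)`, which forces
`⟨y,w⟩ ≤ -ε` for every unit vector `y` of the dual cone (`inner_neg_of_neg_mem_interior`).
Conversely, if `⟨y,w⟩ ≤ -δ < 0` on `G(x)`, then every point of the open `δ`-ball around `-w` pairs
nonnegatively with `G(x)`, hence with the dual cone it generates, hence lies in `K(x)` by the
bipolar theorem (`mem_of_forall_dual`). So stationarity means `φ(x,v) ≥ 0` for all `v ∈ C - x`.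

The minimum `θ(x)` is at most `0` because `v = 0` is admissible, and it is at least `0` when `φ` is
nonnegative. If `φ(x,d) < 0` for some admissible `d`, then `t • d` is admissible for `t ∈ [0,1]` by
convexity and the linear term dominates for small `t > 0`, so `θ(x) < 0`.
-/

open scoped Pointwise RealInnerProductSpace

section ConeLemmas

variable {E : Type*} [NormedAddCommGroup E] [InnerProductSpace ℝ E]

/-- Bipolar theorem for a closed convex cone: a point pairing nonnegatively with the whole dual cone
belongs to the cone. -/
theorem mem_of_forall_dual [CompleteSpace E] {K : Set E} (hcl : IsClosed K)
    (hcone : ∀ c : ℝ, 0 ≤ c → ∀ y ∈ K, c • y ∈ K) (hconv : Convex ℝ K) (hne : K.Nonempty)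
    {u : E} (hu : ∀ w : E, (∀ y ∈ K, 0 ≤ ⟪w, y⟫) → 0 ≤ ⟪w, u⟫) : u ∈ K := by
  by_contra hnot
  obtain ⟨f, s, hfu, hfK⟩ := geometric_hahn_banach_point_closed hconv hcl hnot
  obtain ⟨k₀, hk₀⟩ := hne
  have h0 : s < 0 := by
    have := hfK _ (hcone 0 le_rfl k₀ hk₀)
    simpa using this
  have hnonneg : ∀ y ∈ K, 0 ≤ f y := by
    intro y hy
    by_contra! hneg
    -- Scaling `y` by `s / f y > 0` makes `f` take exactly the separating value `s`.
    have h := hfK _ (hcone (s / f y) (div_nonneg_of_nonpos h0.le hneg.le) y hy)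
    rw [map_smul, smul_eq_mul, div_mul_cancel₀ _ hneg.ne] at h
    exact lt_irrefl _ h
  have h := hu ((InnerProductSpace.toDual ℝ E).symm f) (fun y hy => by
    rw [InnerProductSpace.toDual_symm_apply]
    exact hnonneg y hy)
  rw [InnerProductSpace.toDual_symm_apply] at h
  linarith

theorem inner_neg_of_neg_mem_interior {K : Set E} {w y : E} (hw : -w ∈ interior K)
    (hy : ∀ k ∈ K, 0 ≤ ⟪y, k⟫) (hnorm : ‖y‖ = 1) : ⟪y, w⟫ < 0 := by
  obtain ⟨ε, hε, hball⟩ := Metric.isOpen_iff.1 isOpen_interior _ hw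
  have hmem : -w - (ε / 2) • y ∈ K := by
    apply interior_subset
    apply hball
    rw [Metric.mem_ball, dist_eq_norm, sub_sub_cancel_left, norm_neg, norm_smul, hnorm,
      Real.norm_of_nonneg (by positivity)]
    linarith
  have h := hy _ hmem
  rw [inner_sub_right, inner_neg_right, inner_smul_right, real_inner_self_eq_norm_sq, hnorm] at h
  linarith

/-- If the unit vectors of `G` generate the dual of the closed convex cone `K` and pair with `w`
below `-δ`, then `-w` is interior to `K`. -/
theorem neg_mem_interior_of_inner_le [CompleteSpace E] {K G : Set E} (hcl : IsClosed K)
    (hcone : ∀ c : ℝ, 0 ≤ c → ∀ y ∈ K, c • y ∈ K) (hconv : Convex ℝ K) (hne : K.Nonempty)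
    (hnorm : ∀ y ∈ G, ‖y‖ = 1)
    (hgen : ∀ z : E, (∀ y ∈ K, 0 ≤ ⟪z, y⟫) →
      ∃ c : ℝ, 0 ≤ c ∧ ∃ u ∈ convexHull ℝ G, z = c • u)
    {w : E} {δ : ℝ} (hδ : 0 < δ) (hG : ∀ y ∈ G, ⟪y, w⟫ ≤ -δ) : -w ∈ interior K := by
  rw [mem_interior]
  refine ⟨Metric.ball (-w) δ, ?_, Metric.isOpen_ball, Metric.mem_ball_self hδ⟩
  intro u hu
  rw [Metric.mem_ball, dist_eq_norm, sub_neg_eq_add] at hu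
  refine mem_of_forall_dual hcl hcone hconv hne fun z hz => ?_
  obtain ⟨c, hc, g, hg, rfl⟩ := hgen z hz
  have hhalf : Convex ℝ {g : E | 0 ≤ ⟪g, u⟫} := by
    intro a ha b hb p q hp hq _
    simp only [Set.mem_ofPred_eq, inner_add_left, real_inner_smul_left] at ha hb ⊢
    positivity
  have hsub : G ⊆ {g : E | 0 ≤ ⟪g, u⟫} := by
    intro y hy
    have h1 := neg_le_of_abs_le (abs_real_inner_le_norm y (u + w))
    rw [hnorm y hy, one_mul, inner_add_right] at h1
    have h2 := hG y hy
    simp only [Set.mem_ofPred_eq]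
    linarith
  have hgu : 0 ≤ ⟪g, u⟫ := convexHull_min hsub hhalf hg
  rw [real_inner_smul_left]
  exact mul_nonneg hc hgu

end ConeLemmas

/-- With `φ(x,v) = max_{y ∈ G(x)} ⟨y, J_F(x)v⟩` (where `G(x)` is a
compact subset of `K*(x) ∩ S(0,1)` whose convex hull generates `K*(x)`) and
`θ_β(x) = min_{v ∈ C − x} (‖v‖²/2 + β φ(x,v))` for fixed `β > 0`, a point
`x ∈ C` is stationary iff `θ_β(x) = 0`. -/
theorem stmt_8 {n m : ℕ}
    (C : Set (EuclideanSpace ℝ (Fin n)))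
    (hCne : C.Nonempty) (hCcl : IsClosed C) (hCconv : Convex ℝ C)
    (F : EuclideanSpace ℝ (Fin n) → EuclideanSpace ℝ (Fin m))
    (hF : ContDiff ℝ 1 F)
    (K : EuclideanSpace ℝ (Fin n) → Set (EuclideanSpace ℝ (Fin m)))
    (hKcl : ∀ x, IsClosed (K x))
    (hKcone : ∀ x, ∀ c : ℝ, 0 ≤ c → ∀ y ∈ K x, c • y ∈ K x)
    (hKconv : ∀ x, Convex ℝ (K x))
    (hKpointed : ∀ x, ∀ y, y ∈ K x → -y ∈ K x → y = 0)
    (hKint : ∀ x, (interior (K x)).Nonempty)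
    (Kdual : EuclideanSpace ℝ (Fin n) → Set (EuclideanSpace ℝ (Fin m)))
    (hKdual : ∀ x, Kdual x = {w | ∀ y ∈ K x, 0 ≤ ⟪w, y⟫})
    (G : EuclideanSpace ℝ (Fin n) → Set (EuclideanSpace ℝ (Fin m)))
    (hGcompact : ∀ x, IsCompact (G x))
    (hGsub : ∀ x, G x ⊆ Kdual x ∩ Metric.sphere (0 : EuclideanSpace ℝ (Fin m)) 1)
    (hGgen : ∀ x, {z : EuclideanSpace ℝ (Fin m) |
      ∃ c : ℝ, 0 ≤ c ∧ ∃ u ∈ convexHull ℝ (G x), z = c • u} = Kdual x)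
    (φ : EuclideanSpace ℝ (Fin n) → EuclideanSpace ℝ (Fin n) → ℝ)
    (hφ : ∀ x v, IsGreatest {t : ℝ | ∃ y ∈ G x, t = ⟪y, fderiv ℝ F x v⟫} (φ x v))
    (β : ℝ) (hβ : 0 < β)
    (θ : EuclideanSpace ℝ (Fin n) → ℝ)
    (hθ : ∀ x, IsLeast {t : ℝ | ∃ v : EuclideanSpace ℝ (Fin n),
      x + v ∈ C ∧ t = ‖v‖ ^ 2 / 2 + β * φ x v} (θ x))
    (x : EuclideanSpace ℝ (Fin n)) (hx : x ∈ C) :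
    (∀ d : EuclideanSpace ℝ (Fin n), x + d ∈ C →
      fderiv ℝ F x d ∉ -interior (K x)) ↔ θ x = 0 := by
  have hdual : ∀ y ∈ G x, ∀ k ∈ K x, 0 ≤ ⟪y, k⟫ := fun y hy => by
    have h := (hGsub x hy).1
    rwa [hKdual] at h
  have hnorm : ∀ y ∈ G x, ‖y‖ = 1 := fun y hy => by simpa using (hGsub x hy).2
  have hsign : ∀ v, fderiv ℝ F x v ∈ -interior (K x) ↔ φ x v < 0 := by
    intro v
    rw [Set.mem_neg]
    obtain ⟨⟨y, hy, hval⟩, hub⟩ := hφ x v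
    constructor
    · intro h
      rw [hval]
      exact inner_neg_of_neg_mem_interior h (hdual y hy) (hnorm y hy)
    · intro h
      refine neg_mem_interior_of_inner_le (G := G x) (δ := -φ x v) (hKcl x) (hKcone x) (hKconv x)
        ((hKint x).mono interior_subset) hnorm (fun z hz => ?_) (by linarith) (fun y hy => ?_)
      · have hz' : z ∈ Kdual x := by
          rw [hKdual]
          exact hz
        rw [← hGgen] at hz'
        exact hz'
      · rw [neg_neg]
        exact hub ⟨y, hy, rfl⟩
  have hscale : ∀ t : ℝ, 0 ≤ t → ∀ v, φ x (t • v) ≤ t * φ x v := by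
    intro t ht v
    obtain ⟨y, hy, hval⟩ := (hφ x (t • v)).1
    rw [hval, map_smul, inner_smul_right]
    exact mul_le_mul_of_nonneg_left ((hφ x v).2 ⟨y, hy, rfl⟩) ht
  obtain ⟨⟨v₀, hv₀, hθv₀⟩, hmin⟩ := hθ x
  simp only [hsign, not_lt]
  constructor
  · intro h
    apply le_antisymm
    · have h1 : θ x ≤ ‖(0 : EuclideanSpace ℝ (Fin n))‖ ^ 2 / 2 + β * φ x 0 :=
        hmin ⟨0, by simpa using hx, rfl⟩
      have h2 : φ x 0 ≤ 0 := by simpa using hscale 0 le_rfl 0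
      have h3 := mul_nonpos_of_nonneg_of_nonpos hβ.le h2
      simp only [norm_zero] at h1
      linarith
    · rw [hθv₀]
      have := h v₀ hv₀
      positivity
  · intro h d hd
    by_contra! hneg
    -- With `a` and `t` as below, the objective at `t • d` is at most `t * (t * ‖d‖ ^ 2 / 2 - a)`,
    -- and `t * ‖d‖ ^ 2 ≤ a`.
    set a : ℝ := -(β * φ x d) with ha
    have hapos : 0 < a := by
      have := mul_neg_of_pos_of_neg hβ hneg
      linarith
    have hN : 0 ≤ ‖d‖ ^ 2 := by positivity
    set t : ℝ := a / (‖d‖ ^ 2 + a) with ht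
    have htpos : 0 < t := by positivity
    have ht1 : t ≤ 1 := by
      rw [ht, div_le_one (by positivity)]
      linarith
    have htN : t * ‖d‖ ^ 2 ≤ a := by
      have : t * (‖d‖ ^ 2 + a) = a := div_mul_cancel₀ _ (by positivity)
      nlinarith [mul_pos htpos hapos]
    have hmem : x + t • d ∈ C := by
      have := hCconv.add_smul_mem hx hd ⟨htpos.le, ht1⟩
      exact this
    have h1 : θ x ≤ ‖t • d‖ ^ 2 / 2 + β * φ x (t • d) := hmin ⟨t • d, hmem, rfl⟩
    rw [h, norm_smul, Real.norm_of_nonneg htpos.le, mul_pow] at h1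
    have h2 := mul_le_mul_of_nonneg_left (hscale t htpos.le d) hβ.le
    have h3 : β * (t * φ x d) = -(t * a) := by rw [ha]; ring
    have h4 := mul_le_mul_of_nonneg_left htN htpos.le
    have h5 := mul_pos htpos hapos
    nlinarith
end

section
/- Let C be a nonempty, closed, convex subset of ℝⁿ, let F : ℝⁿ → ℝᵐ be continuously differentiable with Jacobian J_F, let G(x) be a nonempty compact subset of the unit sphere of ℝᵐ, define φ(x,v) := max_{y ∈ G(x)} ⟨y, J_F(x)v⟩, and for β > 0 let v(x) denote the unique minimizer of ‖v‖²/2 + β·φ(x,v) over v ∈ C − x. Then for every x ∈ C, ‖v(x)‖ ≤ 2β‖J_F(x)‖, where ‖J_F(x)‖ is the operator norm of the Jacobian. -/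
/-!
Comparing the minimizer with the admissible point `0`, where the objective vanishes, gives
`‖v x‖² / 2 ≤ -β φ(x, v x)`. Since `φ(x, v x) = ⟪y, J v x⟫` for a unit vector `y`,
Cauchy–Schwarz bounds the right-hand side by `β ‖J‖ ‖v x‖`; dividing by `‖v x‖` when it is
nonzero yields the claim.
-/

open scoped Pointwise RealInnerProductSpace

/-- If `v(x)` is the unique minimizer of `‖v‖²/2 + β φ(x,v)` over
`v ∈ C − x` (with `G(x)` a nonempty compact subset of the unit sphere), then
`‖v(x)‖ ≤ 2β‖J_F(x)‖` for every `x ∈ C`. -/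
theorem stmt_9 {n m : ℕ}
    (C : Set (EuclideanSpace ℝ (Fin n)))
    (hCne : C.Nonempty) (hCcl : IsClosed C) (hCconv : Convex ℝ C)
    (F : EuclideanSpace ℝ (Fin n) → EuclideanSpace ℝ (Fin m))
    (hF : ContDiff ℝ 1 F)
    (G : EuclideanSpace ℝ (Fin n) → Set (EuclideanSpace ℝ (Fin m)))
    (hGne : ∀ x, (G x).Nonempty)
    (hGcompact : ∀ x, IsCompact (G x))
    (hGsphere : ∀ x, G x ⊆ Metric.sphere (0 : EuclideanSpace ℝ (Fin m)) 1)
    (φ : EuclideanSpace ℝ (Fin n) → EuclideanSpace ℝ (Fin n) → ℝ)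
    (hφ : ∀ x v, IsGreatest {t : ℝ | ∃ y ∈ G x, t = ⟪y, fderiv ℝ F x v⟫} (φ x v))
    (β : ℝ) (hβ : 0 < β)
    (v : EuclideanSpace ℝ (Fin n) → EuclideanSpace ℝ (Fin n))
    (hv : ∀ x, x + v x ∈ C ∧ ∀ u : EuclideanSpace ℝ (Fin n), x + u ∈ C →
      ‖v x‖ ^ 2 / 2 + β * φ x (v x) ≤ ‖u‖ ^ 2 / 2 + β * φ x u) :
    ∀ x ∈ C, ‖v x‖ ≤ 2 * β * ‖fderiv ℝ F x‖ := by
  intro x hx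
  obtain ⟨y, hy, hφy⟩ := (hφ x (v x)).1
  obtain ⟨z, -, hφz⟩ := (hφ x 0).1
  have hzero : φ x 0 = 0 := by simpa using hφz
  have hnorm : ‖y‖ = 1 := by simpa using hGsphere x hy
  have hlow : -(‖fderiv ℝ F x‖ * ‖v x‖) ≤ φ x (v x) := by
    have h1 := neg_le_of_abs_le (abs_real_inner_le_norm y (fderiv ℝ F x (v x)))
    have h2 := (fderiv ℝ F x).le_opNorm (v x)
    rw [hnorm, one_mul] at h1
    rw [hφy]
    linarith
  -- `u = 0` is admissible because `x ∈ C`.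
  have hmin := (hv x).2 0 (by simpa using hx)
  simp only [hzero, norm_zero] at hmin
  have hquad : ‖v x‖ * ‖v x‖ ≤ 2 * β * ‖fderiv ℝ F x‖ * ‖v x‖ := by
    have := mul_le_mul_of_nonneg_left hlow hβ.le
    nlinarith
  rcases (norm_nonneg (v x)).eq_or_lt with h | h
  · rw [← h]; positivity
  · exact le_of_mul_le_mul_right hquad h
end

section
/- Let C be a nonempty, closed, convex subset of ℝⁿ, let F : ℝⁿ → ℝᵐ be continuously differentiable with Jacobian J_F, let G be a set-valued map assigning to each x a nonempty compact subset G(x) of the unit sphere of ℝᵐ, and assume G has closed graph. Define φ(x,v) := max_{y ∈ G(x)} ⟨y, J_F(x)v⟩ and θ_β(x) := min_{v ∈ C − x} (‖v‖²/2 + β·φ(x,v)) for fixed β > 0. Then θ_β is upper semicontinuous on C. -/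
/-!
Fix `x₀ ∈ C` and a minimiser `v₀` for `θ x₀`, and set `w = x₀ + v₀ ∈ C`. Moving the base point while
keeping the target `w` fixed gives the competitor `v = w - x` for `θ x`, so
`θ x ≤ ‖w - x‖² / 2 + β φ(x, w - x)`, with equality at `x₀`. The right-hand side is the maximum over
`y ∈ G x` of a jointly continuous function of `(x, y)`. Since `G` has closed graph and values in the
compact unit sphere, such a maximum is upper semicontinuous in `x`
(`eventually_forall_lt_of_isClosed_graph`, a form of Berge's maximum theorem).
-/

open scoped Pointwise RealInnerProductSpace

/-- The upper half of Berge's maximum theorem: for a closed-graph correspondence `G` with values in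
a fixed compact set, a strict upper bound on `h (x₀, ·)` over `G x₀` persists on `G x` for `x` near
`x₀`. -/
theorem eventually_forall_lt_of_isClosed_graph {X Y : Type*} [TopologicalSpace X]
    [TopologicalSpace Y] {K : Set Y} (hK : IsCompact K) {G : X → Set Y}
    (hGK : ∀ x, G x ⊆ K) (hG : IsClosed {p : X × Y | p.2 ∈ G p.1})
    {h : X × Y → ℝ} (hh : Continuous h) {x₀ : X} {c : ℝ}
    (hc : ∀ y ∈ G x₀, h (x₀, y) < c) :
    ∀ᶠ x in nhds x₀, ∀ y ∈ G x, h (x, y) < c := by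
  have key : ∀ᶠ x in nhds x₀, ∀ y ∈ K, y ∈ G x → h (x, y) < c := by
    apply hK.eventually_forall_of_forall_eventually
    intro y _
    by_cases hy : y ∈ G x₀
    · filter_upwards [hh.continuousAt.eventually_lt_const (hc y hy)] with z hz _
      exact hz
    · filter_upwards [hG.isOpen_compl.mem_nhds (show (x₀, y) ∈ _ from hy)] with z hz hz'
      exact absurd hz' hz
  filter_upwards [key] with x hx y hy
  exact hx y (hGK x hy) hy

/-- If the set-valued map `G` (with nonempty compact values in the
unit sphere) has closed graph, then `θ_β(x) = min_{v ∈ C − x} (‖v‖²/2 + β φ(x,v))`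
is upper semicontinuous on `C`. -/
theorem stmt_10 {n m : ℕ}
    (C : Set (EuclideanSpace ℝ (Fin n)))
    (hCne : C.Nonempty) (hCcl : IsClosed C) (hCconv : Convex ℝ C)
    (F : EuclideanSpace ℝ (Fin n) → EuclideanSpace ℝ (Fin m))
    (hF : ContDiff ℝ 1 F)
    (G : EuclideanSpace ℝ (Fin n) → Set (EuclideanSpace ℝ (Fin m)))
    (hGne : ∀ x, (G x).Nonempty)
    (hGcompact : ∀ x, IsCompact (G x))
    (hGsphere : ∀ x, G x ⊆ Metric.sphere (0 : EuclideanSpace ℝ (Fin m)) 1)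
    (hGraph : IsClosed {p : EuclideanSpace ℝ (Fin n) × EuclideanSpace ℝ (Fin m) |
      p.2 ∈ G p.1})
    (φ : EuclideanSpace ℝ (Fin n) → EuclideanSpace ℝ (Fin n) → ℝ)
    (hφ : ∀ x v, IsGreatest {t : ℝ | ∃ y ∈ G x, t = ⟪y, fderiv ℝ F x v⟫} (φ x v))
    (β : ℝ) (hβ : 0 < β)
    (θ : EuclideanSpace ℝ (Fin n) → ℝ)
    (hθ : ∀ x, IsLeast {t : ℝ | ∃ v : EuclideanSpace ℝ (Fin n),
      x + v ∈ C ∧ t = ‖v‖ ^ 2 / 2 + β * φ x v} (θ x)) :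
    UpperSemicontinuousOn θ C := by
  intro x₀ _ c hc
  obtain ⟨v₀, hv₀, hθ₀⟩ := (hθ x₀).1
  have hJ : Continuous (fderiv ℝ F) := hF.continuous_fderiv one_ne_zero
  have hh : Continuous fun p : EuclideanSpace ℝ (Fin n) × EuclideanSpace ℝ (Fin m) =>
      ‖x₀ + v₀ - p.1‖ ^ 2 / 2 + β * ⟪p.2, fderiv ℝ F p.1 (x₀ + v₀ - p.1)⟫ := by
    have hJv : Continuous fun p : EuclideanSpace ℝ (Fin n) × EuclideanSpace ℝ (Fin m) =>
        fderiv ℝ F p.1 (x₀ + v₀ - p.1) :=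
      (hJ.comp continuous_fst).clm_apply (by fun_prop)
    fun_prop
  have hev := eventually_forall_lt_of_isClosed_graph
    (isCompact_sphere (0 : EuclideanSpace ℝ (Fin m)) 1) hGsphere hGraph hh (x₀ := x₀) (c := c) (by
      intro y hy
      have hle : ⟪y, fderiv ℝ F x₀ v₀⟫ ≤ φ x₀ v₀ := (hφ x₀ v₀).2 ⟨y, hy, rfl⟩
      have := mul_le_mul_of_nonneg_left hle hβ.le
      simp only [add_sub_cancel_left]
      linarith)
  refine Filter.Eventually.filter_mono nhdsWithin_le_nhds ?_
  filter_upwards [hev] with x hx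
  obtain ⟨y, hy, hφy⟩ := (hφ x (x₀ + v₀ - x)).1
  have hle : θ x ≤ ‖x₀ + v₀ - x‖ ^ 2 / 2 + β * φ x (x₀ + v₀ - x) :=
    (hθ x).2 ⟨x₀ + v₀ - x, by rwa [add_sub_cancel], rfl⟩
  rw [hφy] at hle
  exact hle.trans_lt (hx y hy)
end

section
/- Let C be a nonempty, bounded, closed, convex subset of ℝⁿ, let F : ℝⁿ → ℝᵐ be continuously differentiable with locally Lipschitz Jacobian J_F, let G assign to each x a nonempty compact subset G(x) of the unit sphere of ℝᵐ with d_H(G(x), G(x̂)) ≤ L_G‖x − x̂‖ for all x, x̂ ∈ C and some L_G > 0, define φ(x,v) := max_{y ∈ G(x)} ⟨y, J_F(x)v⟩, and for β > 0 let θ_β(x) := min_{v ∈ C − x} (‖v‖²/2 + β·φ(x,v)). Then θ_β is lower semicontinuous on C. -/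
open scoped Pointwise RealInnerProductSpace

/-!
Substituting `c = x + v` makes the feasible set of the minimisation the fixed set `C`, so it suffices
to bound the change of the objective between two base points uniformly in `c ∈ C`. Let `D` bound the
diameter of `C`. A maximiser `y₀ ∈ G x₀` for `φ x₀ (c - x₀)` has a point `y ∈ G x` within
`L_G ‖x - x₀‖`, and `y` is a competitor in `φ x (c - x)`. Hence `θ x₀ - θ x ≤ ε x` with `ε` continuous
and `ε x₀ = 0`, which gives lower semicontinuity.
-/

/-- If a unit vector `y` lies within `δ` of `y₀`, then `⟪y, A v⟫` is at least `⟪y₀, A₀ v₀⟫` up to an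
error controlled by `δ`, `‖A₀ - A‖` and `‖v₀ - v‖`. -/
lemma inner_apply_sub_le {E H : Type*} [NormedAddCommGroup E] [InnerProductSpace ℝ E]
    [NormedAddCommGroup H] [InnerProductSpace ℝ H] (A₀ A : E →L[ℝ] H) (v₀ v : E) (y₀ y : H)
    (hy : ‖y‖ = 1) {δ D : ℝ} (hδ : ‖y₀ - y‖ ≤ δ) (hv₀ : ‖v₀‖ ≤ D) :
    ⟪y₀, A₀ v₀⟫ - ⟪y, A v⟫ ≤ δ * (‖A₀‖ * D) + ‖A₀ - A‖ * D + ‖A‖ * ‖v₀ - v‖ := by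
  have hsplit : ⟪y₀, A₀ v₀⟫ - ⟪y, A v⟫
      = ⟪y₀ - y, A₀ v₀⟫ + ⟪y, (A₀ - A) v₀⟫ + ⟪y, A (v₀ - v)⟫ := by
    simp only [inner_sub_left, inner_sub_right, map_sub, ContinuousLinearMap.sub_apply]
    ring
  have hδ0 : 0 ≤ δ := (norm_nonneg _).trans hδ
  have h1 : ⟪y₀ - y, A₀ v₀⟫ ≤ δ * (‖A₀‖ * D) :=
    (real_inner_le_norm _ _).trans (by
      gcongr
      exact (A₀.le_opNorm v₀).trans (by gcongr))
  have h2 : ⟪y, (A₀ - A) v₀⟫ ≤ ‖A₀ - A‖ * D := by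
    refine (real_inner_le_norm _ _).trans ?_
    rw [hy, one_mul]
    exact ((A₀ - A).le_opNorm v₀).trans (by gcongr)
  have h3 : ⟪y, A (v₀ - v)⟫ ≤ ‖A‖ * ‖v₀ - v‖ := by
    refine (real_inner_le_norm _ _).trans ?_
    rw [hy, one_mul]
    exact A.le_opNorm _
  linarith

/-- If `C` is nonempty bounded closed convex, `J_F` is locally
Lipschitz, and `G` is Lipschitz on `C` w.r.t. the Hausdorff distance (with
nonempty compact values in the unit sphere), then
`θ_β(x) = min_{v ∈ C − x} (‖v‖²/2 + β φ(x,v))` is lower semicontinuous on `C`. -/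
theorem stmt_12 {n m : ℕ}
    (C : Set (EuclideanSpace ℝ (Fin n)))
    (hCne : C.Nonempty) (hCbdd : Bornology.IsBounded C)
    (hCcl : IsClosed C) (hCconv : Convex ℝ C)
    (F : EuclideanSpace ℝ (Fin n) → EuclideanSpace ℝ (Fin m))
    (hF : ContDiff ℝ 1 F)
    (hJLip : LocallyLipschitz fun x => fderiv ℝ F x)
    (G : EuclideanSpace ℝ (Fin n) → Set (EuclideanSpace ℝ (Fin m)))
    (hGne : ∀ x, (G x).Nonempty)
    (hGcompact : ∀ x, IsCompact (G x))
    (hGsphere : ∀ x, G x ⊆ Metric.sphere (0 : EuclideanSpace ℝ (Fin m)) 1)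
    (LG : ℝ) (hLG : 0 < LG)
    (hGLip : ∀ x ∈ C, ∀ xh ∈ C,
      Metric.hausdorffDist (G x) (G xh) ≤ LG * ‖x - xh‖)
    (φ : EuclideanSpace ℝ (Fin n) → EuclideanSpace ℝ (Fin n) → ℝ)
    (hφ : ∀ x v, IsGreatest {t : ℝ | ∃ y ∈ G x, t = ⟪y, fderiv ℝ F x v⟫} (φ x v))
    (β : ℝ) (hβ : 0 < β)
    (θ : EuclideanSpace ℝ (Fin n) → ℝ)
    (hθ : ∀ x, IsLeast {t : ℝ | ∃ v : EuclideanSpace ℝ (Fin n),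
      x + v ∈ C ∧ t = ‖v‖ ^ 2 / 2 + β * φ x v} (θ x)) :
    LowerSemicontinuousOn θ C := by
  have hJ : Continuous (fderiv ℝ F) := hJLip.continuous
  obtain ⟨D, hD⟩ := Metric.isBounded_iff.1 hCbdd
  intro x₀ hx₀ a ha
  let ε : EuclideanSpace ℝ (Fin n) → ℝ := fun x =>
    D * ‖x - x₀‖ + β * (LG * ‖x - x₀‖ * (‖fderiv ℝ F x₀‖ * D)
      + ‖fderiv ℝ F x₀ - fderiv ℝ F x‖ * D + ‖fderiv ℝ F x‖ * ‖x - x₀‖)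
  have hε : Continuous ε := by fun_prop
  have hε0 : ε x₀ = 0 := by simp [ε]
  have key : ∀ x ∈ C, θ x₀ - θ x ≤ ε x := by
    intro x hx
    obtain ⟨v, hv, hθv⟩ := (hθ x).1
    -- The displacement from `x₀` to the minimising point `x + v ∈ C` is feasible at `x₀`.
    let v₀ := x + v - x₀
    have hv₀C : x₀ + v₀ ∈ C := by simpa [v₀] using hv
    have hle : θ x₀ ≤ ‖v₀‖ ^ 2 / 2 + β * φ x₀ v₀ := (hθ x₀).2 ⟨v₀, hv₀C, rfl⟩
    have hvD : ‖v‖ ≤ D := by simpa [dist_eq_norm] using hD hv hx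
    have hv₀D : ‖v₀‖ ≤ D := by simpa [dist_eq_norm, v₀] using hD hv hx₀
    have hdiff : v₀ - v = x - x₀ := by simp only [v₀]; abel
    have hsq : ‖v₀‖ ^ 2 / 2 - ‖v‖ ^ 2 / 2 ≤ D * ‖x - x₀‖ := by
      have h := norm_sub_norm_le v₀ v
      rw [hdiff] at h
      nlinarith [norm_nonneg v₀, norm_nonneg v, norm_nonneg (x - x₀)]
    obtain ⟨y₀, hy₀, hφ₀⟩ := (hφ x₀ v₀).1
    obtain ⟨y, hy, hyd⟩ := (hGcompact x).exists_infDist_eq_dist (hGne x) y₀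
    have hδ : ‖y₀ - y‖ ≤ LG * ‖x - x₀‖ := by
      rw [← dist_eq_norm, ← hyd, norm_sub_rev]
      exact (Metric.infDist_le_hausdorffDist_of_mem hy₀
        (Metric.hausdorffEDist_ne_top_of_nonempty_of_bounded (hGne x₀) (hGne x)
          (hGcompact x₀).isBounded (hGcompact x).isBounded)).trans (hGLip x₀ hx₀ x hx)
    have hφx : ⟪y, fderiv ℝ F x v⟫ ≤ φ x v := (hφ x v).2 ⟨y, hy, rfl⟩
    have hin := inner_apply_sub_le (fderiv ℝ F x₀) (fderiv ℝ F x) v₀ v y₀ y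
      (by simpa using hGsphere x hy) hδ hv₀D
    rw [hdiff, ← hφ₀] at hin
    have hφdiff := mul_le_mul_of_nonneg_left (hin.trans' (sub_le_sub_left hφx _)) hβ.le
    rw [mul_sub] at hφdiff
    simp only [ε]
    linarith
  have hev : ∀ᶠ x in nhds x₀, ε x < θ x₀ - a :=
    hε.continuousAt.eventually_lt_const (by rw [hε0]; linarith)
  filter_upwards [nhdsWithin_le_nhds hev, self_mem_nhdsWithin] with x hxε hxC
  linarith [key x hxC]
end

section
/- Let C be a nonempty, closed, convex subset of ℝⁿ, let F : ℝⁿ → ℝᵐ be continuously differentiable with Jacobian J_F, and for each x let K(x) ⊆ ℝᵐ be a closed, pointed, convex cone with nonempty interior, with G(x) a compact subset of K*(x) ∩ S(0,1) whose convex hull generates K*(x). Fix σ, γ ∈ (0,1), β > 0, and δ ∈ [0,1). Suppose x ∈ C and v ≠ 0 is a δ-approximate solution of the subproblem min_{v ∈ C − x} (‖v‖²/2 + β·φ(x,v)). Then there exists a nonnegative integer j such that F(x) − F(x + γʲ v) + σγʲ J_F(x)v ∈ K(x); in particular, the least such integer j(x) is finite. -/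
/-!
The point `v = 0` is feasible for the subproblem, so `θ x ≤ 0`; since `v ≠ 0`, an approximate
solution has `φ x v < 0`. Put `d = J_F(x) v`. The difference quotients
`(F x - F (x + t v)) / t + σ d` tend to `-(1 - σ) d` as `t → 0`, and every unit vector `y ∈ G x`
pairs with this limit to at least `(1 - σ) (-φ x v) > 0`. This bound is uniform in `y`, so for
`t = γ ^ j` small the quotient pairs nonnegatively with all of `G x`, hence with the whole dual cone
it generates. The bidual theorem (`mem_cone_of_forall_dual_nonneg`) then puts the quotient in
`K x`, and scaling by `t` finishes the proof.
-/


open scoped Pointwise RealInnerProductSpace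

/-- The bidual theorem for a closed convex cone, via Hahn-Banach separation: a point pairing
nonnegatively with every element of the dual cone belongs to the cone. -/
theorem mem_cone_of_forall_dual_nonneg {E : Type*} [NormedAddCommGroup E]
    [InnerProductSpace ℝ E] [CompleteSpace E] {K : Set E} (hcl : IsClosed K)
    (hconv : Convex ℝ K) (hne : K.Nonempty)
    (hcone : ∀ c : ℝ, 0 ≤ c → ∀ y ∈ K, c • y ∈ K) {e : E}
    (he : ∀ w : E, (∀ y ∈ K, 0 ≤ ⟪w, y⟫) → 0 ≤ ⟪w, e⟫) : e ∈ K := by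
  by_contra hnot
  obtain ⟨f, u, hfe, hfK⟩ := geometric_hahn_banach_point_closed hconv hcl hnot
  have hu : u < 0 := by
    obtain ⟨b, hb⟩ := hne
    simpa using hfK _ (hcone 0 le_rfl b hb)
  have hw := he ((InnerProductSpace.toDual ℝ E).symm f) (fun y hy => by
    rw [InnerProductSpace.toDual_symm_apply]
    by_contra! hneg
    -- Rescaling `y` would bring `f` exactly to the separating value `u`.
    have h := hfK _ (hcone (u / f y) (div_nonneg_of_nonpos hu.le hneg.le) y hy)
    rw [map_smul, smul_eq_mul, div_mul_cancel₀ _ hneg.ne] at h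
    exact lt_irrefl _ h)
  rw [InnerProductSpace.toDual_symm_apply] at hw
  linarith

/-- The difference quotients of the line search converge along `t = γ ^ j`. -/
theorem tendsto_lineSearch_quotient {E H : Type*} [NormedAddCommGroup E] [NormedSpace ℝ E]
    [NormedAddCommGroup H] [NormedSpace ℝ H] {F : E → H} {x : E}
    (hF : DifferentiableAt ℝ F x) (v : E) (σ : ℝ) {γ : ℝ} (hγ : γ ∈ Set.Ioo (0 : ℝ) 1) :
    Filter.Tendsto
      (fun j : ℕ => (γ ^ j)⁻¹ • (F x - F (x + γ ^ j • v)) + σ • fderiv ℝ F x v)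
      Filter.atTop (nhds (-(1 - σ) • fderiv ℝ F x v)) := by
  have hline : HasLineDerivAt ℝ F (fderiv ℝ F x v) x v := hF.hasFDerivAt.hasLineDerivAt v
  have hpow : Filter.Tendsto (fun j : ℕ => γ ^ j) Filter.atTop (nhdsWithin 0 {0}ᶜ) :=
    tendsto_nhdsWithin_iff.2 ⟨tendsto_pow_atTop_nhds_zero_of_lt_one hγ.1.le hγ.2,
      Filter.Eventually.of_forall fun j => (pow_pos hγ.1 j).ne'⟩
  have h := ((hline.tendsto_slope_zero.comp hpow).neg).add_const (σ • fderiv ℝ F x v)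
  have hlim : -(fderiv ℝ F x v) + σ • fderiv ℝ F x v = -(1 - σ) • fderiv ℝ F x v := by module
  rw [hlim] at h
  refine h.congr fun j => ?_
  simp only [Function.comp_apply]
  rw [← smul_neg, neg_sub]

/-- If `v ≠ 0` is a `δ`-approximate solution of the subproblem at
`x ∈ C`, then the Armijo-type line-search terminates: there is a nonnegative
integer `j` with `F(x) − F(x + γʲv) + σγʲ J_F(x)v ∈ K(x)`. -/
theorem stmt_13 {n m : ℕ}
    (C : Set (EuclideanSpace ℝ (Fin n)))
    (hCne : C.Nonempty) (hCcl : IsClosed C) (hCconv : Convex ℝ C)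
    (F : EuclideanSpace ℝ (Fin n) → EuclideanSpace ℝ (Fin m))
    (hF : ContDiff ℝ 1 F)
    (K : EuclideanSpace ℝ (Fin n) → Set (EuclideanSpace ℝ (Fin m)))
    (hKcl : ∀ x, IsClosed (K x))
    (hKcone : ∀ x, ∀ c : ℝ, 0 ≤ c → ∀ y ∈ K x, c • y ∈ K x)
    (hKconv : ∀ x, Convex ℝ (K x))
    (hKpointed : ∀ x, ∀ y, y ∈ K x → -y ∈ K x → y = 0)
    (hKint : ∀ x, (interior (K x)).Nonempty)
    (Kdual : EuclideanSpace ℝ (Fin n) → Set (EuclideanSpace ℝ (Fin m)))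
    (hKdual : ∀ x, Kdual x = {w | ∀ y ∈ K x, 0 ≤ ⟪w, y⟫})
    (G : EuclideanSpace ℝ (Fin n) → Set (EuclideanSpace ℝ (Fin m)))
    (hGcompact : ∀ x, IsCompact (G x))
    (hGsub : ∀ x, G x ⊆ Kdual x ∩ Metric.sphere (0 : EuclideanSpace ℝ (Fin m)) 1)
    (hGgen : ∀ x, {z : EuclideanSpace ℝ (Fin m) |
      ∃ c : ℝ, 0 ≤ c ∧ ∃ u ∈ convexHull ℝ (G x), z = c • u} = Kdual x)
    (φ : EuclideanSpace ℝ (Fin n) → EuclideanSpace ℝ (Fin n) → ℝ)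
    (hφ : ∀ x v, IsGreatest {t : ℝ | ∃ y ∈ G x, t = ⟪y, fderiv ℝ F x v⟫} (φ x v))
    (σ γ : ℝ) (hσ : σ ∈ Set.Ioo (0 : ℝ) 1) (hγ : γ ∈ Set.Ioo (0 : ℝ) 1)
    (β : ℝ) (hβ : 0 < β) (δ : ℝ) (hδ : δ ∈ Set.Ico (0 : ℝ) 1)
    (θ : EuclideanSpace ℝ (Fin n) → ℝ)
    (hθ : ∀ x, IsLeast {t : ℝ | ∃ v : EuclideanSpace ℝ (Fin n),
      x + v ∈ C ∧ t = ‖v‖ ^ 2 / 2 + β * φ x v} (θ x))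
    (x : EuclideanSpace ℝ (Fin n)) (hx : x ∈ C)
    (v : EuclideanSpace ℝ (Fin n)) (hvne : v ≠ 0)
    (hvfeas : x + v ∈ C)
    (hvapprox : β * φ x v + ‖v‖ ^ 2 / 2 ≤ (1 - δ) * θ x) :
    ∃ j : ℕ, F x - F (x + γ ^ j • v) + (σ * γ ^ j) • fderiv ℝ F x v ∈ K x := by
  have hφ0 : φ x 0 = 0 := by
    obtain ⟨y, -, hy⟩ := (hφ x 0).1
    simpa using hy
  have hθ0 : θ x ≤ 0 := (hθ x).2 ⟨0, by simpa using hx, by simp [hφ0]⟩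
  have hφneg : φ x v < 0 := by
    have hv : 0 < ‖v‖ ^ 2 := by positivity
    have hrhs : (1 - δ) * θ x ≤ 0 :=
      mul_nonpos_of_nonneg_of_nonpos (by linarith [hδ.2]) hθ0
    by_contra! hcon
    have := mul_nonneg hβ.le hcon
    linarith
  set d := fderiv ℝ F x v with hd
  have hε : 0 < (1 - σ) * (-φ x v) := mul_pos (by linarith [hσ.2]) (by linarith)
  obtain ⟨j, hj⟩ := ((Metric.tendsto_nhds.1 (tendsto_lineSearch_quotient
    (hF.differentiable one_ne_zero x) v σ hγ)) _ hε).exists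
  rw [← hd] at hj
  set e := (γ ^ j)⁻¹ • (F x - F (x + γ ^ j • v)) + σ • d with he
  have hG : ∀ y ∈ G x, 0 ≤ ⟪y, e⟫ := fun y hy => by
    have hy1 : ‖y‖ = 1 := by simpa using (hGsub x hy).2
    have hyd : ⟪y, d⟫ ≤ φ x v := (hφ x v).2 ⟨y, hy, rfl⟩
    have herr : |⟪y, e - -(1 - σ) • d⟫| ≤ ‖e - -(1 - σ) • d‖ := by
      simpa [hy1] using abs_real_inner_le_norm y (e - -(1 - σ) • d)
    rw [dist_eq_norm] at hj
    have hlow := (abs_le.1 herr).1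
    rw [inner_sub_right, inner_smul_right] at hlow
    have := mul_le_mul_of_nonneg_left hyd (by linarith [hσ.2] : (0 : ℝ) ≤ 1 - σ)
    linarith
  have hhull : convexHull ℝ (G x) ⊆ {y | 0 ≤ ⟪y, e⟫} := by
    refine convexHull_min hG fun a ha b hb s t hs ht _ => ?_
    simp only [Set.mem_setOf_eq] at ha hb ⊢
    rw [inner_add_left, real_inner_smul_left, real_inner_smul_left]
    positivity
  have heK : e ∈ K x := by
    refine mem_cone_of_forall_dual_nonneg (hKcl x) (hKconv x)
      ((hKint x).mono interior_subset) (hKcone x) fun w hw => ?_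
    have hwdual : w ∈ Kdual x := by rw [hKdual]; exact hw
    rw [← hGgen] at hwdual
    obtain ⟨c, hc, u, hu, rfl⟩ := hwdual
    rw [real_inner_smul_left]
    exact mul_nonneg hc (hhull hu)
  refine ⟨j, ?_⟩
  have hpos := pow_pos hγ.1 j
  convert hKcone x (γ ^ j) hpos.le e heK using 1
  rw [he, smul_add, smul_inv_smul₀ hpos.ne', smul_smul, mul_comm σ]
end

section
/- Let C be a nonempty, closed, convex subset of ℝⁿ, let F : ℝⁿ → ℝᵐ be continuously differentiable, and suppose ∪_{x∈C} K(x) ⊆ 𝒦 for a closed, pointed, convex cone 𝒦 ⊆ ℝᵐ, where each K(x) is a closed, pointed, convex cone with nonempty interior. Let (x^k) ⊆ C with x^{k+1} = x^k + γ_k v^k, where for each k: γ_k ∈ (0,1], v^k ≠ 0 satisfies J_F(x^k)v^k ∈ −int(K(x^k)), and the Armijo condition F(x^k) − F(x^{k+1}) + σγ_k J_F(x^k)v^k ∈ K(x^k) holds with σ ∈ (0,1). If x* is an accumulation point of (x^k), then lim_{k→∞} F(x^k) = F(x*). -/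
open scoped Pointwise RealInnerProductSpace

/-!
Let `≼` be the order of the cone `𝒦`. By the Armijo condition and descent, `F (x k)` decreases with
respect to `≼`; closedness of `𝒦`, applied along a subsequence `x (φ k) → xs`, gives
`F xs ≼ F (x k)` for every `k`. Hence `0 ≼ F (x l) - F xs ≼ F (x k) - F xs` whenever `k ≤ l`.
A closed pointed cone in finite dimension is normal (`exists_pos_mul_norm_le_norm_add`), so
`‖F (x l) - F xs‖` is at most a constant times `‖F (x k) - F xs‖`, and the latter is as small as
desired for a suitable `k` in the subsequence.
-/

/-- A closed pointed cone in a finite-dimensional space is normal. The unit vectors of the cone form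
a compact set disjoint from the closed set `-S`, hence at positive distance from it; the general
case follows by scaling. -/
lemma exists_pos_mul_norm_le_norm_add {E : Type*} [NormedAddCommGroup E] [NormedSpace ℝ E]
    [FiniteDimensional ℝ E] {S : Set E} (hcl : IsClosed S)
    (hcone : ∀ c : ℝ, 0 ≤ c → ∀ y ∈ S, c • y ∈ S)
    (hpointed : ∀ y, y ∈ S → -y ∈ S → y = 0) :
    ∃ δ : ℝ, 0 < δ ∧ ∀ a ∈ S, ∀ b ∈ S, δ * ‖a‖ ≤ ‖a + b‖ := by
  have : ProperSpace E := FiniteDimensional.proper ℝ E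
  have hcomp : IsCompact (Metric.sphere (0 : E) 1 ∩ S) := (isCompact_sphere 0 1).inter_right hcl
  have hdisj : Disjoint (Metric.sphere (0 : E) 1 ∩ S) (-S) := by
    rw [Set.disjoint_left]
    rintro a ⟨ha1, haS⟩ han
    have h0 := hpointed a haS han
    simp [h0] at ha1
  obtain ⟨r, hr, h⟩ := Metric.exists_pos_forall_lt_edist hcomp hcl.neg hdisj
  refine ⟨r, by exact_mod_cast hr, fun a ha b hb => ?_⟩
  rcases eq_or_ne a 0 with rfl | ha0
  · simp
  have hpos : 0 < ‖a‖ := norm_pos_iff.mpr ha0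
  have hinv : 0 ≤ ‖a‖⁻¹ := by positivity
  have h1 := h (‖a‖⁻¹ • a) ⟨by simp [norm_smul, ha0], hcone _ hinv a ha⟩
    (-(‖a‖⁻¹ • b)) (by simpa using hcone _ hinv b hb)
  rw [edist_nndist, ENNReal.coe_lt_coe, ← NNReal.coe_lt_coe, coe_nndist, dist_eq_norm,
    sub_neg_eq_add, ← smul_add, norm_smul, norm_inv, norm_norm, inv_mul_eq_div,
    lt_div_iff₀ hpos] at h1
  exact h1.le

/-- Along the iterates `x^{k+1} = x^k + γ_k v^k` of the method
(with descent directions and the Armijo condition), if `∪_{x∈C} K(x) ⊆ 𝒦` for a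
closed pointed convex cone `𝒦` and `x*` is an accumulation point of `(x^k)`,
then `F(x^k) → F(x*)`. -/
theorem stmt_14 {n m : ℕ}
    (C : Set (EuclideanSpace ℝ (Fin n)))
    (hCne : C.Nonempty) (hCcl : IsClosed C) (hCconv : Convex ℝ C)
    (F : EuclideanSpace ℝ (Fin n) → EuclideanSpace ℝ (Fin m))
    (hF : ContDiff ℝ 1 F)
    (K : EuclideanSpace ℝ (Fin n) → Set (EuclideanSpace ℝ (Fin m)))
    (hKcl : ∀ x, IsClosed (K x))
    (hKcone : ∀ x, ∀ c : ℝ, 0 ≤ c → ∀ y ∈ K x, c • y ∈ K x)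
    (hKconv : ∀ x, Convex ℝ (K x))
    (hKpointed : ∀ x, ∀ y, y ∈ K x → -y ∈ K x → y = 0)
    (hKint : ∀ x, (interior (K x)).Nonempty)
    (𝒦 : Set (EuclideanSpace ℝ (Fin m)))
    (h𝒦cl : IsClosed 𝒦)
    (h𝒦cone : ∀ c : ℝ, 0 ≤ c → ∀ y ∈ 𝒦, c • y ∈ 𝒦)
    (h𝒦conv : Convex ℝ 𝒦)
    (h𝒦pointed : ∀ y, y ∈ 𝒦 → -y ∈ 𝒦 → y = 0)
    (h𝒦sup : ∀ x ∈ C, K x ⊆ 𝒦)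
    (σ : ℝ) (hσ : σ ∈ Set.Ioo (0 : ℝ) 1)
    (x v : ℕ → EuclideanSpace ℝ (Fin n)) (γk : ℕ → ℝ)
    (hxC : ∀ k, x k ∈ C)
    (hγk : ∀ k, γk k ∈ Set.Ioc (0 : ℝ) 1)
    (hvne : ∀ k, v k ≠ 0)
    (hdescent : ∀ k, fderiv ℝ F (x k) (v k) ∈ -interior (K (x k)))
    (hupdate : ∀ k, x (k + 1) = x k + γk k • v k)
    (hArmijo : ∀ k, F (x k) - F (x (k + 1)) +
      (σ * γk k) • fderiv ℝ F (x k) (v k) ∈ K (x k))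
    (xs : EuclideanSpace ℝ (Fin n))
    (haccum : ∃ φs : ℕ → ℕ, StrictMono φs ∧
      Filter.Tendsto (fun k => x (φs k)) Filter.atTop (nhds xs)) :
    Filter.Tendsto (fun k => F (x k)) Filter.atTop (nhds (F xs)) := by
  obtain ⟨φ, hφ, hlim⟩ := haccum
  have hadd : ∀ a ∈ 𝒦, ∀ b ∈ 𝒦, a + b ∈ 𝒦 := by
    intro a ha b hb
    have h := h𝒦cone 2 (by norm_num) _
      (h𝒦conv ha hb (by norm_num : (0 : ℝ) ≤ 1 / 2) (by norm_num : (0 : ℝ) ≤ 1 / 2) (by norm_num))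
    simpa [smul_add, smul_smul] using h
  have hstep : ∀ k, F (x k) - F (x (k + 1)) ∈ 𝒦 := by
    intro k
    have hd : -(fderiv ℝ F (x k) (v k)) ∈ 𝒦 :=
      h𝒦sup _ (hxC k) (interior_subset (hdescent k))
    have h := hadd _ (h𝒦sup _ (hxC k) (hArmijo k)) _
      (h𝒦cone (σ * γk k) (mul_nonneg hσ.1.le (hγk k).1.le) _ hd)
    simpa [smul_neg] using h
  have hmono : ∀ k l, k ≤ l → F (x k) - F (x l) ∈ 𝒦 := by
    intro k l hkl
    induction l, hkl using Nat.le_induction with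
    | base => simpa using h𝒦cone 0 le_rfl _ (hstep k)
    | succ l _ ih => simpa using hadd _ ih _ (hstep l)
  have hFlim : Filter.Tendsto (fun k => F (x (φ k))) Filter.atTop (nhds (F xs)) :=
    (hF.continuous.tendsto xs).comp hlim
  have hbdd : ∀ k, F (x k) - F xs ∈ 𝒦 := fun k =>
    h𝒦cl.mem_of_tendsto (hFlim.const_sub (F (x k)))
      ((Filter.eventually_ge_atTop k).mono fun j hj => hmono k (φ j) (hj.trans (hφ.id_le j)))
  obtain ⟨δ, hδ, hnormal⟩ := exists_pos_mul_norm_le_norm_add h𝒦cl h𝒦cone h𝒦pointed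
  rw [Metric.tendsto_atTop] at hFlim ⊢
  intro ε hε
  obtain ⟨j, hj⟩ := hFlim (δ * ε) (mul_pos hδ hε)
  refine ⟨φ j, fun l hl => ?_⟩
  have h1 := hj j le_rfl
  have h2 := hnormal _ (hbdd l) _ (hmono (φ j) l hl)
  rw [show F (x l) - F xs + (F (x (φ j)) - F (x l)) = F (x (φ j)) - F xs by abel] at h2
  rw [dist_eq_norm] at h1 ⊢
  exact lt_of_mul_lt_mul_left (h2.trans_lt h1) hδ.le
end

section
/- Let C be a nonempty, closed, convex subset of ℝⁿ, let F : ℝⁿ → ℝᵐ be continuously differentiable with Jacobian J_F, let G(x) be a nonempty compact subset of the unit sphere of ℝᵐ, define φ(x,v) := max_{y ∈ G(x)} ⟨y, J_F(x)v⟩ and θ_β(x) := min_{v ∈ C − x} (‖v‖²/2 + β·φ(x,v)). If x ∈ C, β > 0, δ ∈ [0,1), and v is a δ-approximate solution of the subproblem at x, i.e., v ∈ C − x and β·φ(x,v) + ‖v‖²/2 ≤ (1−δ)·θ_β(x), then ‖v‖ ≤ 2β‖J_F(x)‖, where ‖J_F(x)‖ is the operator norm of the Jacobian. -/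
/-!
Testing the subproblem with the zero direction gives `θ x ≤ 0`, so the approximate solution `v`
satisfies `‖v‖² / 2 ≤ -β φ(x, v)`. As `φ(x, v)` is attained at a unit vector, Cauchy–Schwarz and the
operator norm bound give `-φ(x, v) ≤ ‖J_F(x)‖ ‖v‖`, and dividing by `‖v‖` concludes.
-/

open scoped Pointwise RealInnerProductSpace

/-- If `v` is a `δ`-approximate solution of the subproblem at
`x ∈ C` with parameter `β > 0`, then `‖v‖ ≤ 2β‖J_F(x)‖`. -/
theorem stmt_15 {n m : ℕ}
    (C : Set (EuclideanSpace ℝ (Fin n)))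
    (hCne : C.Nonempty) (hCcl : IsClosed C) (hCconv : Convex ℝ C)
    (F : EuclideanSpace ℝ (Fin n) → EuclideanSpace ℝ (Fin m))
    (hF : ContDiff ℝ 1 F)
    (G : EuclideanSpace ℝ (Fin n) → Set (EuclideanSpace ℝ (Fin m)))
    (hGne : ∀ x, (G x).Nonempty)
    (hGcompact : ∀ x, IsCompact (G x))
    (hGsphere : ∀ x, G x ⊆ Metric.sphere (0 : EuclideanSpace ℝ (Fin m)) 1)
    (φ : EuclideanSpace ℝ (Fin n) → EuclideanSpace ℝ (Fin n) → ℝ)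
    (hφ : ∀ x v, IsGreatest {t : ℝ | ∃ y ∈ G x, t = ⟪y, fderiv ℝ F x v⟫} (φ x v))
    (β : ℝ) (hβ : 0 < β) (δ : ℝ) (hδ : δ ∈ Set.Ico (0 : ℝ) 1)
    (θ : EuclideanSpace ℝ (Fin n) → ℝ)
    (hθ : ∀ x, IsLeast {t : ℝ | ∃ v : EuclideanSpace ℝ (Fin n),
      x + v ∈ C ∧ t = ‖v‖ ^ 2 / 2 + β * φ x v} (θ x))
    (x : EuclideanSpace ℝ (Fin n)) (hx : x ∈ C)
    (v : EuclideanSpace ℝ (Fin n)) (hvfeas : x + v ∈ C)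
    (hvapprox : β * φ x v + ‖v‖ ^ 2 / 2 ≤ (1 - δ) * θ x) :
    ‖v‖ ≤ 2 * β * ‖fderiv ℝ F x‖ := by
  -- The direction `0` is feasible with value `0`, hence `θ x ≤ 0`.
  have hφ0 : φ x 0 = 0 := by
    obtain ⟨y, _, hy⟩ := (hφ x 0).1
    simpa using hy
  have hθ0 : θ x ≤ 0 := (hθ x).2 ⟨0, by simpa using hx, by simp [hφ0]⟩
  -- Cauchy–Schwarz at a maximizer `y`, which has norm one.
  have hlow : -(‖fderiv ℝ F x‖ * ‖v‖) ≤ φ x v := by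
    obtain ⟨y, hyG, hy⟩ := (hφ x v).1
    have hy1 : ‖y‖ = 1 := by simpa using hGsphere x hyG
    have hcs := abs_real_inner_le_norm y (fderiv ℝ F x v)
    rw [hy1, one_mul] at hcs
    rw [hy]
    linarith [neg_abs_le ⟪y, fderiv ℝ F x v⟫, (fderiv ℝ F x).le_opNorm v]
  have hnonpos : (1 - δ) * θ x ≤ 0 :=
    mul_nonpos_of_nonneg_of_nonpos (by linarith [hδ.2]) hθ0
  have hsq : ‖v‖ * ‖v‖ ≤ (2 * β * ‖fderiv ℝ F x‖) * ‖v‖ := by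
    nlinarith [mul_le_mul_of_nonneg_left hlow hβ.le]
  rcases (norm_nonneg v).eq_or_lt with h | h
  · rw [← h]
    positivity
  · exact le_of_mul_le_mul_right hsq h
end

section
/- Let C be a nonempty, compact, convex subset of ℝⁿ, let F : ℝⁿ → ℝᵐ be continuously differentiable, and for each x let K(x) ⊆ ℝᵐ be a closed, pointed, convex cone with nonempty interior, with G(x) a compact subset of K*(x) ∩ S(0,1) whose convex hull generates K*(x). Assume: (a) ∪_{x∈C} K(x) ⊆ 𝒦 for a closed, pointed, convex cone 𝒦; (b) the map G has closed graph; (c) d_H(G(x), G(x̂)) ≤ L_G‖x − x̂‖ for all x, x̂ ∈ C; (d) J_F is locally Lipschitz. Fix σ, γ ∈ (0,1), δ ∈ [0,1), and 0 < β̄ ≤ β̂ < ∞. Let (x^k) ⊆ C be generated by the inexact projected gradient method: β_k ∈ [β̄, β̂]; v^k ≠ 0 is a δ-approximate solution of the subproblem min_{v ∈ C − x^k} (‖v‖²/2 + β_k·φ(x^k,v)); γ_k = γ^{j(k)} where j(k) is the least nonnegative integer j with F(x^k) − F(x^k + γʲ v^k) + σγʲ J_F(x^k)v^k ∈ K(x^k);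 and x^{k+1} = x^k + γ_k v^k. Then every accumulation point of (x^k) is a stationary point. -/
/-!
The proof is the usual descent argument, made quantitative near an accumulation point `xs`.

* *The vectors `J_F(x^k) v^k` lie in `-K(x^k)` and are not small.* As `θ_β ≤ 0`, every `y ∈ G(x^k)`
  satisfies `⟪y, J_F(x^k) v^k⟫ ≤ -‖v^k‖² / (2 β_k)`; since `G(x)` generates the dual cone,
  the bipolar theorem (`mem_of_forall_generator`) puts `-J_F(x^k) v^k` in `K(x^k)`.
* *Sufficient decrease.* A closed pointed cone `𝒦` admits `w` with `⟪w, y⟫ ≥ c ‖y‖` on `𝒦`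
  (`exists_uniformly_pos_functional`). Hence `⟪w, F(x^k)⟫` is nonincreasing and bounded below, and
  its decrements dominate `c σ γ_k ‖J_F(x^k) v^k‖`, which therefore tends to `0`.
* *Steps bounded below.* With `J_F` Lipschitz near `xs`, the first-order expansion of `F` has
  a quadratic error (`norm_taylor_le`), so the acceptance test succeeds for every step below a
  fixed threshold, uniformly for `x^k` near `xs`. Along the subsequence, `J_F(x^k) v^k → 0`.
* *Conclusion.* If `J_F(xs) d ∈ -int K(xs)`, then `⟪y, J_F(xs) d⟫ < 0` on `G(xs)`. The closed graph
  of `G` and compactness of the sphere give, along a further subsequence,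
  `φ(x^k, xs + d - x^k) ≤ -η` with `η > 0`. Scaling this direction by a small `t` bounds
  `θ_{β_k}(x^k)` above by a fixed negative number, whereas
  `(1 - δ) θ_{β_k}(x^k) ≥ β_k φ(x^k, v^k) ≥ -β̂ ‖J_F(x^k) v^k‖ → 0`.
-/

open scoped Pointwise RealInnerProductSpace

section Aux

variable {m n : ℕ}

local notation "E" => EuclideanSpace ℝ (Fin m)

/-- Separation of a point from a closed convex cone by an element of the dual cone. -/
lemma exists_dual_neg {K : Set E} (hcl : IsClosed K)
    (hcone : ∀ c : ℝ, 0 ≤ c → ∀ y ∈ K, c • y ∈ K) (hconv : Convex ℝ K) (hne : K.Nonempty)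
    {z : E} (hz : z ∉ K) : ∃ w : E, (∀ y ∈ K, 0 ≤ ⟪w, y⟫) ∧ ⟪w, z⟫ < 0 := by
  obtain ⟨f, u, hu, hK⟩ := geometric_hahn_banach_point_closed hconv hcl hz
  obtain ⟨y₀, hy₀⟩ := hne
  have hu0 : u < 0 := by
    have := hK _ (hcone 0 le_rfl y₀ hy₀)
    simpa using this
  refine ⟨(InnerProductSpace.toDual ℝ E).symm f, fun y hy => ?_, ?_⟩
  · rw [InnerProductSpace.toDual_symm_apply]
    by_contra! hneg
    -- Scaling `y` until `f` takes the value `u` contradicts the strict separation.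
    have := hK _ (hcone (u / f y) (div_nonneg_of_nonpos hu0.le hneg.le) y hy)
    rw [map_smul, smul_eq_mul, div_mul_cancel₀ _ hneg.ne] at this
    exact lt_irrefl _ this
  · rw [InnerProductSpace.toDual_symm_apply]
    linarith

/-- Bipolar theorem in terms of generators: a vector pairing nonnegatively with a generator `G`
of the dual cone of `K` lies in `K`. -/
lemma mem_of_forall_generator {K G : Set E} (hcl : IsClosed K)
    (hcone : ∀ c : ℝ, 0 ≤ c → ∀ y ∈ K, c • y ∈ K) (hconv : Convex ℝ K) (hne : K.Nonempty)
    (hgen : {z : E | ∃ c : ℝ, 0 ≤ c ∧ ∃ u ∈ convexHull ℝ G, z = c • u}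
      = {w | ∀ y ∈ K, 0 ≤ ⟪w, y⟫})
    {z : E} (hz : ∀ y ∈ G, 0 ≤ ⟪y, z⟫) : z ∈ K := by
  by_contra hzK
  obtain ⟨w, hw, hwz⟩ := exists_dual_neg hcl hcone hconv hne hzK
  have hw' : w ∈ {w : E | ∀ y ∈ K, 0 ≤ ⟪w, y⟫} := hw
  rw [← hgen] at hw'
  obtain ⟨c, hc, u, hu, rfl⟩ := hw'
  have hhalf : Convex ℝ {y : E | 0 ≤ ⟪y, z⟫} := by
    intro a ha b hb s t hs ht _
    simp only [Set.mem_ofPred_eq] at *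
    rw [inner_add_left, real_inner_smul_left, real_inner_smul_left]
    positivity
  have hu' : 0 ≤ ⟪u, z⟫ := convexHull_min (fun y hy => hz y hy) hhalf hu
  rw [real_inner_smul_left] at hwz
  exact absurd (mul_nonneg hc hu') (not_le.2 hwz)

/-- A closed pointed convex cone has a dual vector that is coercive on it. For each unit vector `s`
of the cone, `-s` is separated from the cone, which gives a dual vector positive near `s`; the sum
over a finite subcover of the unit vectors works. -/
lemma exists_uniformly_pos_functional {K : Set E} (hcl : IsClosed K)
    (hcone : ∀ c : ℝ, 0 ≤ c → ∀ y ∈ K, c • y ∈ K) (hconv : Convex ℝ K)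
    (hpt : ∀ y, y ∈ K → -y ∈ K → y = 0) :
    ∃ w : E, ∃ c : ℝ, 0 < c ∧ ∀ y ∈ K, c * ‖y‖ ≤ ⟪w, y⟫ := by
  have hS : IsCompact (K ∩ Metric.sphere (0 : E) 1) := (isCompact_sphere 0 1).inter_left hcl
  have key : ∀ s ∈ K ∩ Metric.sphere (0 : E) 1,
      ∃ w : E, (∀ y ∈ K, 0 ≤ ⟪w, y⟫) ∧ 0 < ⟪w, s⟫ := by
    rintro s ⟨hs, hs1⟩
    have hns : -s ∉ K := fun h => by
      have := hpt s hs h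
      simp [this] at hs1
    obtain ⟨w, hw, hws⟩ := exists_dual_neg hcl hcone hconv ⟨s, hs⟩ hns
    exact ⟨w, hw, by simpa using hws⟩
  choose! W hW hWpos using key
  obtain ⟨T, hTS, hT⟩ := hS.elim_nhds_subcover (fun s => {y : E | 0 < ⟪W s, y⟫})
    (fun s hs => (isOpen_lt continuous_const (by fun_prop)).mem_nhds (hWpos s hs))
  have hpos : ∀ y ∈ K ∩ Metric.sphere (0 : E) 1, 0 < ⟪∑ s ∈ T, W s, y⟫ := by
    intro y hy
    rw [sum_inner]
    obtain ⟨s, hsT, hs⟩ := Set.mem_iUnion₂.1 (hT hy)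
    exact Finset.sum_pos' (fun i hi => hW i (hTS i hi) y hy.1) ⟨s, hsT, hs⟩
  obtain ⟨c, hc, hcS⟩ : ∃ c : ℝ, 0 < c ∧
      ∀ y ∈ K ∩ Metric.sphere (0 : E) 1, c ≤ ⟪∑ s ∈ T, W s, y⟫ := by
    rcases (K ∩ Metric.sphere (0 : E) 1).eq_empty_or_nonempty with he | hne
    · exact ⟨1, one_pos, by simp [he]⟩
    · obtain ⟨y₀, hy₀, hmin⟩ := hS.exists_isMinOn hne
        (f := fun y : E => ⟪∑ s ∈ T, W s, y⟫) (by fun_prop)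
      exact ⟨_, hpos y₀ hy₀, fun y hy => hmin hy⟩
  refine ⟨∑ s ∈ T, W s, c, hc, fun y hy => ?_⟩
  rcases eq_or_ne y 0 with rfl | hy0
  · simp
  · have hny : 0 < ‖y‖ := norm_pos_iff.2 hy0
    have := hcS (‖y‖⁻¹ • y) ⟨hcone _ (by positivity) y hy, by
      simp [norm_smul, hny.ne']⟩
    rw [real_inner_smul_right] at this
    calc c * ‖y‖ ≤ (‖y‖⁻¹ * ⟪∑ s ∈ T, W s, y⟫) * ‖y‖ := by gcongr
      _ = _ := by field_simp

/-- First-order expansion with quadratic error where the derivative is `L`-Lipschitz. -/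
lemma norm_taylor_le {F : EuclideanSpace ℝ (Fin n) → E} (hF : Differentiable ℝ F)
    {s : Set (EuclideanSpace ℝ (Fin n))} (hs : Convex ℝ s) {L : NNReal}
    (hL : LipschitzOnWith L (fun x => fderiv ℝ F x) s)
    {x u : EuclideanSpace ℝ (Fin n)} (hx : x ∈ s) (hxu : x + u ∈ s) :
    ‖F (x + u) - F x - fderiv ℝ F x u‖ ≤ L * ‖u‖ ^ 2 := by
  have hb : ∀ z ∈ segment ℝ x (x + u), ‖fderiv ℝ F z - fderiv ℝ F x‖ ≤ L * ‖u‖ := by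
    intro z hz
    have h1 := hL.norm_sub_le (hs.segment_subset hx hxu hz) hx
    have h2 : ‖z - x‖ ≤ ‖u‖ := by
      have := norm_sub_le_of_mem_segment hz
      simpa using this
    exact h1.trans (by gcongr)
  have := (convex_segment x (x + u)).norm_image_sub_le_of_norm_fderiv_le'
    (fun z _ => hF z) hb (left_mem_segment ..) (right_mem_segment ..)
  rw [add_sub_cancel_left] at this
  calc _ ≤ _ := this
    _ = _ := by ring

/-- Unit vectors of the dual cone are strictly positive on the interior of the cone. -/
lemma inner_pos_of_mem_interior {K : Set E} {y p : E} (hy : ∀ z ∈ K, 0 ≤ ⟪y, z⟫)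
    (hy1 : ‖y‖ = 1) (hp : p ∈ interior K) : 0 < ⟪y, p⟫ := by
  obtain ⟨ε, hε, hball⟩ := Metric.mem_nhds_iff.1 (mem_interior_iff_mem_nhds.1 hp)
  have := hy (p - (ε / 2) • y) (hball (by
    simp [Metric.mem_ball, norm_smul, hy1, abs_of_pos hε, hε]))
  rw [inner_sub_right, real_inner_smul_right, real_inner_self_eq_norm_sq, hy1] at this
  linarith

/-- Backtracking with ratio `γ` stops at a step no smaller than `min 1 (γ τ)` when every step
`γ ^ j ≤ τ` is accepted. -/
lemma backtracking_step_ge {P : ℕ → Prop} {j : ℕ} (hj : IsLeast {i | P i} j) {γ τ : ℝ}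
    (hγ : 0 < γ) (h : ∀ i, γ ^ i ≤ τ → P i) : min 1 (γ * τ) ≤ γ ^ j := by
  cases j with
  | zero => simp
  | succ i =>
    have hi : τ < γ ^ i := by
      by_contra! hle
      exact absurd (hj.2 (h i hle)) (by simp)
    rw [pow_succ']
    exact (min_le_right _ _).trans (by gcongr)

end Aux

open Filter Topology

/-- Under assumptions (a)–(d) (with `C` nonempty compact convex),
every accumulation point of the sequence generated by the inexact projected
gradient method is a stationary point of the problem. -/
theorem stmt_16 {n m : ℕ}
    (C : Set (EuclideanSpace ℝ (Fin n)))
    (hCne : C.Nonempty) (hCcompact : IsCompact C) (hCconv : Convex ℝ C)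
    (F : EuclideanSpace ℝ (Fin n) → EuclideanSpace ℝ (Fin m))
    (hF : ContDiff ℝ 1 F)
    (K : EuclideanSpace ℝ (Fin n) → Set (EuclideanSpace ℝ (Fin m)))
    (hKcl : ∀ x, IsClosed (K x))
    (hKcone : ∀ x, ∀ c : ℝ, 0 ≤ c → ∀ y ∈ K x, c • y ∈ K x)
    (hKconv : ∀ x, Convex ℝ (K x))
    (hKpointed : ∀ x, ∀ y, y ∈ K x → -y ∈ K x → y = 0)
    (hKint : ∀ x, (interior (K x)).Nonempty)
    (Kdual : EuclideanSpace ℝ (Fin n) → Set (EuclideanSpace ℝ (Fin m)))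
    (hKdual : ∀ x, Kdual x = {w | ∀ y ∈ K x, 0 ≤ ⟪w, y⟫})
    (G : EuclideanSpace ℝ (Fin n) → Set (EuclideanSpace ℝ (Fin m)))
    (hGcompact : ∀ x, IsCompact (G x))
    (hGsub : ∀ x, G x ⊆ Kdual x ∩ Metric.sphere (0 : EuclideanSpace ℝ (Fin m)) 1)
    (hGgen : ∀ x, {z : EuclideanSpace ℝ (Fin m) |
      ∃ c : ℝ, 0 ≤ c ∧ ∃ u ∈ convexHull ℝ (G x), z = c • u} = Kdual x)
    -- assumption (a)
    (𝒦 : Set (EuclideanSpace ℝ (Fin m)))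
    (h𝒦cl : IsClosed 𝒦)
    (h𝒦cone : ∀ c : ℝ, 0 ≤ c → ∀ y ∈ 𝒦, c • y ∈ 𝒦)
    (h𝒦conv : Convex ℝ 𝒦)
    (h𝒦pointed : ∀ y, y ∈ 𝒦 → -y ∈ 𝒦 → y = 0)
    (h𝒦sup : ∀ x ∈ C, K x ⊆ 𝒦)
    -- assumption (b): G has closed graph
    (hGraph : IsClosed {p : EuclideanSpace ℝ (Fin n) × EuclideanSpace ℝ (Fin m) |
      p.2 ∈ G p.1})
    -- assumption (c): G is Lipschitz w.r.t. the Hausdorff distance on C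
    (LG : ℝ) (hLG : 0 < LG)
    (hGLip : ∀ x ∈ C, ∀ xh ∈ C,
      Metric.hausdorffDist (G x) (G xh) ≤ LG * ‖x - xh‖)
    -- assumption (d): J_F is locally Lipschitz
    (hJLip : LocallyLipschitz fun x => fderiv ℝ F x)
    -- data of the method
    (φ : EuclideanSpace ℝ (Fin n) → EuclideanSpace ℝ (Fin n) → ℝ)
    (hφ : ∀ x v, IsGreatest {t : ℝ | ∃ y ∈ G x, t = ⟪y, fderiv ℝ F x v⟫} (φ x v))
    (θ : ℝ → EuclideanSpace ℝ (Fin n) → ℝ)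
    (hθ : ∀ β : ℝ, 0 < β → ∀ x : EuclideanSpace ℝ (Fin n),
      IsLeast {t : ℝ | ∃ v : EuclideanSpace ℝ (Fin n),
        x + v ∈ C ∧ t = ‖v‖ ^ 2 / 2 + β * φ x v} (θ β x))
    (σ γ : ℝ) (hσ : σ ∈ Set.Ioo (0 : ℝ) 1) (hγ : γ ∈ Set.Ioo (0 : ℝ) 1)
    (δ : ℝ) (hδ : δ ∈ Set.Ico (0 : ℝ) 1)
    (βlo βhi : ℝ) (hβlo : 0 < βlo) (hβlohi : βlo ≤ βhi)
    (x v : ℕ → EuclideanSpace ℝ (Fin n)) (β : ℕ → ℝ) (jk : ℕ → ℕ)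
    (hxC : ∀ k, x k ∈ C)
    (hβ : ∀ k, β k ∈ Set.Icc βlo βhi)
    (hvne : ∀ k, v k ≠ 0)
    (hvfeas : ∀ k, x k + v k ∈ C)
    (hvapprox : ∀ k, β k * φ (x k) (v k) + ‖v k‖ ^ 2 / 2 ≤
      (1 - δ) * θ (β k) (x k))
    (hjk : ∀ k, IsLeast {j : ℕ | F (x k) - F (x k + γ ^ j • v k) +
      (σ * γ ^ j) • fderiv ℝ F (x k) (v k) ∈ K (x k)} (jk k))
    (hupdate : ∀ k, x (k + 1) = x k + γ ^ jk k • v k) :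
    ∀ xs : EuclideanSpace ℝ (Fin n),
      (∃ φs : ℕ → ℕ, StrictMono φs ∧
        Filter.Tendsto (fun k => x (φs k)) Filter.atTop (nhds xs)) →
      ∀ d : EuclideanSpace ℝ (Fin n), xs + d ∈ C →
        fderiv ℝ F xs d ∉ -interior (K xs) := by
  have hγ0 := hγ.1
  have hσ0 := hσ.1
  have hβhi : 0 < βhi := hβlo.trans_le hβlohi
  have hFd : Differentiable ℝ F := hF.differentiable one_ne_zero
  have hβk : ∀ k, 0 < β k := fun k => hβlo.trans_le (hβ k).1
  have hGen : ∀ x, ∀ z, (∀ y ∈ G x, 0 ≤ ⟪y, z⟫) → z ∈ K x := fun x z hz =>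
    mem_of_forall_generator (hKcl x) (hKcone x) (hKconv x)
      ((hKint x).mono interior_subset) ((hGgen x).trans (hKdual x)) hz
  have hGdual : ∀ x, ∀ y ∈ G x, ∀ z ∈ K x, 0 ≤ ⟪y, z⟫ := fun x y hy => by
    have := (hGsub x hy).1
    rwa [hKdual] at this
  have hG1 : ∀ x, ∀ y ∈ G x, ‖y‖ = 1 := fun x y hy => by simpa using (hGsub x hy).2
  have hφle : ∀ x v, ∀ y ∈ G x, ⟪y, fderiv ℝ F x v⟫ ≤ φ x v := fun x v y hy =>
    (hφ x v).2 ⟨y, hy, rfl⟩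
  -- The zero direction shows `θ ≤ 0`.
  have hθ0 : ∀ k, θ (β k) (x k) ≤ 0 := fun k => by
    obtain ⟨y, _, hy⟩ := (hφ (x k) 0).1
    exact (hθ (β k) (hβk k) (x k)).2 ⟨0, by simpa using hxC k, by simp [hy]⟩
  have hφneg : ∀ k, φ (x k) (v k) ≤ -(‖v k‖ ^ 2 / (2 * βhi)) := fun k => by
    have h1 := hvapprox k
    have h2 := mul_nonpos_of_nonneg_of_nonpos (sub_nonneg.2 hδ.2.le) (hθ0 k)
    have h3 : φ (x k) (v k) ≤ -(‖v k‖ ^ 2 / (2 * β k)) := by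
      rw [← neg_div, le_div_iff₀ (by linarith [hβk k])]
      linarith
    have h4 : ‖v k‖ ^ 2 / (2 * βhi) ≤ ‖v k‖ ^ 2 / (2 * β k) := by
      have := hβk k
      have := (hβ k).2
      gcongr
    linarith
  have hφnp : ∀ k, φ (x k) (v k) ≤ 0 := fun k =>
    (hφneg k).trans (neg_nonpos.2 (by positivity))
  have hJK : ∀ k, -(fderiv ℝ F (x k) (v k)) ∈ K (x k) := fun k => hGen _ _ fun y hy => by
    rw [inner_neg_right]
    linarith [hφle (x k) (v k) y hy, hφnp k]
  have hφJ : ∀ k, -‖fderiv ℝ F (x k) (v k)‖ ≤ φ (x k) (v k) := fun k => by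
    obtain ⟨y, hy, hyφ⟩ := (hφ (x k) (v k)).1
    have := abs_real_inner_le_norm y (fderiv ℝ F (x k) (v k))
    rw [hG1 _ y hy, one_mul] at this
    rw [hyφ]
    exact (abs_le.1 this).1
  -- Sufficient decrease of the scalarization `⟪w, F (x k)⟫`.
  obtain ⟨w, c, hc, hw⟩ := exists_uniformly_pos_functional h𝒦cl h𝒦cone h𝒦conv h𝒦pointed
  have hdec : ∀ k, c * σ * (γ ^ jk k * ‖fderiv ℝ F (x k) (v k)‖)
      ≤ ⟪w, F (x k)⟫ - ⟪w, F (x (k + 1))⟫ := fun k => by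
    have h1 := hw _ (h𝒦sup _ (hxC k) (hjk k).1)
    have h2 := hw _ (h𝒦sup _ (hxC k) (hJK k))
    rw [← hupdate k, inner_add_right, inner_sub_right, real_inner_smul_right] at h1
    rw [inner_neg_right, norm_neg] at h2
    have h3 : 0 ≤ σ * γ ^ jk k := by positivity
    have h4 := mul_le_mul_of_nonneg_left h2 h3
    have h5 := (mul_nonneg hc.le (norm_nonneg _)).trans h1
    linarith
  have hlim : Tendsto (fun k => γ ^ jk k * ‖fderiv ℝ F (x k) (v k)‖) atTop (𝓝 0) := by
    have hanti : Antitone fun k => ⟪w, F (x k)⟫ := antitone_nat_of_succ_le fun k => by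
      have h1 := hdec k
      have : 0 ≤ c * σ * (γ ^ jk k * ‖fderiv ℝ F (x k) (v k)‖) := by positivity
      linarith
    have hbdd : BddBelow (Set.range fun k => ⟪w, F (x k)⟫) := by
      have hcont : Continuous fun z => ⟪w, F z⟫ := continuous_const.inner hF.continuous
      refine (hCcompact.bddBelow_image hcont.continuousOn).mono ?_
      rintro _ ⟨k, rfl⟩
      exact ⟨x k, hxC k, rfl⟩
    have ht := tendsto_atTop_ciInf hanti hbdd
    have hdiff := ht.sub (ht.comp (tendsto_add_atTop_nat 1))
    rw [sub_self] at hdiff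
    have := squeeze_zero (fun k => by positivity) hdec hdiff
    have := this.const_mul (c * σ)⁻¹
    rw [mul_zero] at this
    refine this.congr fun k => ?_
    rw [← mul_assoc, inv_mul_cancel₀ (by positivity), one_mul]
  rintro xs ⟨φs, hφs, hxs⟩ d hd hJd
  obtain ⟨D, hDpos, hD⟩ : ∃ D : ℝ, 0 < D ∧ ∀ a ∈ C, ∀ b ∈ C, ‖a - b‖ ≤ D := by
    obtain ⟨D, hD⟩ := Metric.isBounded_iff.1 hCcompact.isBounded
    exact ⟨max D 1, by positivity, fun a ha b hb => by
      rw [← dist_eq_norm]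
      exact (hD ha hb).trans (le_max_left _ _)⟩
  have hvD : ∀ k, ‖v k‖ ≤ D := fun k => by simpa using hD _ (hvfeas k) _ (hxC k)
  -- Step sizes are bounded below while the iterates are close to `xs`.
  have hstep : ∃ g : ℝ, 0 < g ∧ ∀ᶠ i in atTop, g ≤ γ ^ jk (φs i) := by
    obtain ⟨L, U, hU, hL⟩ := hJLip xs
    obtain ⟨r, hr, hball⟩ := Metric.mem_nhds_iff.1 hU
    have hσ1 : 0 < 1 - σ := sub_pos.2 hσ.2
    set τ : ℝ := min ((1 - σ) / (2 * βhi * (L + 1))) (r / (2 * (D + 1))) with hτ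
    have hτ0 : 0 < τ := lt_min (by positivity) (by positivity)
    refine ⟨min 1 (γ * τ), lt_min one_pos (by positivity), ?_⟩
    filter_upwards [hxs (Metric.ball_mem_nhds xs (half_pos hr))] with i hi
    set k := φs i
    have hi' : dist (x k) xs < r / 2 := hi
    refine backtracking_step_ge (hjk k) hγ0 fun j hjτ => hGen _ _ fun y hy => ?_
    set t := γ ^ j with ht
    have ht0 : 0 < t := by positivity
    have htv : ‖t • v k‖ = t * ‖v k‖ := by rw [norm_smul, Real.norm_of_nonneg ht0.le]
    have hmem : x k + t • v k ∈ Metric.ball xs r := by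
      have h1 : t * ‖v k‖ ≤ r / (2 * (D + 1)) * (D + 1) := by
        have := hvD k
        have := hjτ.trans (min_le_right _ _)
        gcongr
        linarith
      have h2 : r / (2 * (D + 1)) * (D + 1) = r / 2 := by field_simp
      rw [Metric.mem_ball]
      calc dist (x k + t • v k) xs ≤ dist (x k + t • v k) (x k) + dist (x k) xs :=
            dist_triangle _ _ _
        _ < r := by
            rw [dist_eq_norm, add_sub_cancel_left, htv]
            linarith
    have hT := norm_taylor_le hFd (convex_ball xs r) (hL.mono hball)
      (Metric.mem_ball.2 (hi'.trans (half_lt_self hr))) hmem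
    have hin := real_inner_le_norm y (F (x k + t • v k) - F (x k) - fderiv ℝ F (x k) (t • v k))
    rw [hG1 _ y hy, one_mul] at hin
    replace hin := hin.trans hT
    rw [inner_sub_right, inner_sub_right, map_smul, real_inner_smul_right, htv] at hin
    rw [inner_add_right, inner_sub_right, real_inner_smul_right]
    have hyφ := (hφle (x k) (v k) y hy).trans (hφneg k)
    have h1 : t * (2 * βhi * (L + 1)) ≤ 1 - σ :=
      (le_div_iff₀ (by positivity)).1 (hjτ.trans (min_le_left _ _))
    have h2 : L * t * ‖v k‖ ^ 2 ≤ (1 - σ) * (‖v k‖ ^ 2 / (2 * βhi)) := by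
      have h3 : t * (2 * βhi) * L ≤ 1 - σ := by
        have : 0 < t * (2 * βhi) := by positivity
        linarith
      calc L * t * ‖v k‖ ^ 2 = t * (2 * βhi) * L * (‖v k‖ ^ 2 / (2 * βhi)) := by field_simp
        _ ≤ _ := by gcongr
    have h4 : 0 ≤ t * ((1 - σ) * (-⟪y, fderiv ℝ F (x k) (v k)⟫) - L * t * ‖v k‖ ^ 2) := by
      refine mul_nonneg ht0.le ?_
      have := mul_le_mul_of_nonneg_left (le_neg_of_le_neg hyφ) hσ1.le
      linarith
    linarith
  have hJ0 : Tendsto (fun i => ‖fderiv ℝ F (x (φs i)) (v (φs i))‖) atTop (𝓝 0) := by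
    obtain ⟨g, hg, hgi⟩ := hstep
    have h1 := (hlim.comp hφs.tendsto_atTop).const_mul g⁻¹
    rw [mul_zero] at h1
    refine squeeze_zero' (Eventually.of_forall fun i => norm_nonneg _) ?_ h1
    filter_upwards [hgi] with i hi
    rw [inv_mul_eq_div, le_div_iff₀ hg, mul_comm]
    exact mul_le_mul_of_nonneg_right hi (norm_nonneg _)
  -- Maximizers `y i ∈ G (x (φs i))` for the directions towards `xs + d`, and a limit of them.
  choose y hyG hyφ using fun i => (hφ (x (φs i)) (xs + d - x (φs i))).1
  obtain ⟨y₀, -, ψ, hψ, hylim⟩ := (isCompact_sphere (0 : EuclideanSpace ℝ (Fin m)) 1).tendsto_subseq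
    (fun i => (hGsub _ (hyG i)).2)
  have hxψ : Tendsto (fun i => x (φs (ψ i))) atTop (𝓝 xs) := hxs.comp hψ.tendsto_atTop
  have hy₀ : y₀ ∈ G xs :=
    hGraph.mem_of_tendsto (hxψ.prodMk_nhds hylim) (Eventually.of_forall fun i => hyG (ψ i))
  have hneg : ⟪y₀, fderiv ℝ F xs d⟫ < 0 := by
    have := inner_pos_of_mem_interior (hGdual xs y₀ hy₀) (hG1 xs y₀ hy₀) (Set.mem_neg.1 hJd)
    rw [inner_neg_right] at this
    linarith
  have hφlim : Tendsto (fun i => φ (x (φs (ψ i))) (xs + d - x (φs (ψ i)))) atTop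
      (𝓝 ⟪y₀, fderiv ℝ F xs d⟫) := by
    have hJ : Tendsto (fun i => fderiv ℝ F (x (φs (ψ i)))) atTop (𝓝 (fderiv ℝ F xs)) :=
      ((hF.continuous_fderiv one_ne_zero).tendsto xs).comp hxψ
    have hdir : Tendsto (fun i => xs + d - x (φs (ψ i))) atTop (𝓝 d) := by
      simpa using (tendsto_const_nhds (x := xs + d)).sub hxψ
    have happ : Tendsto (fun i => fderiv ℝ F (x (φs (ψ i))) (xs + d - x (φs (ψ i)))) atTop
        (𝓝 (fderiv ℝ F xs d)) :=
      (isBoundedBilinearMap_apply.continuous.tendsto (fderiv ℝ F xs, d)).comp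
        (hJ.prodMk_nhds hdir)
    exact (hylim.inner happ).congr fun i => (hyφ (ψ i)).symm
  obtain ⟨η, hη, hηneg⟩ : ∃ η : ℝ, 0 < η ∧ ⟪y₀, fderiv ℝ F xs d⟫ < -η :=
    ⟨-⟪y₀, fderiv ℝ F xs d⟫ / 2, by linarith, by linarith⟩
  -- With this `t`, the quadratic term `t² D² / 2` is at most half of the linear term `t β̄ η`.
  obtain ⟨t, ht0, ht1, htD⟩ : ∃ t : ℝ, 0 < t ∧ t ≤ 1 ∧ t * D ^ 2 ≤ βlo * η :=
    ⟨min 1 (βlo * η / D ^ 2), lt_min one_pos (by positivity), min_le_left _ _,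
      (le_div_iff₀ (by positivity)).1 (min_le_right _ _)⟩
  have hδ1 : 0 < 1 - δ := sub_pos.2 hδ.2
  have hε : 0 < (1 - δ) * (t * (βlo * η) / 2) / βhi := by positivity
  obtain ⟨i, hi1, hi2⟩ := ((hφlim.eventually_lt_const hηneg).and
    ((hJ0.comp hψ.tendsto_atTop).eventually_lt_const hε)).exists
  simp only [Function.comp_apply] at hi2
  set k := φs (ψ i)
  set u := xs + d - x k with hu
  have hφt : φ (x k) (t • u) ≤ t * φ (x k) u := by
    obtain ⟨z, hz, hzφ⟩ := (hφ (x k) (t • u)).1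
    rw [hzφ, map_smul, real_inner_smul_right]
    exact mul_le_mul_of_nonneg_left (hφle _ _ z hz) ht0.le
  have hfeas : x k + t • u ∈ C :=
    hCconv.add_smul_sub_mem (hxC k) hd ⟨ht0.le, ht1⟩
  have hθle := (hθ (β k) (hβk k) (x k)).2 ⟨t • u, hfeas, rfl⟩
  have hquad : ‖t • u‖ ^ 2 / 2 ≤ t * (βlo * η) / 2 := by
    rw [norm_smul, Real.norm_of_nonneg ht0.le]
    have h1 : (t * ‖u‖) ^ 2 ≤ (t * D) ^ 2 := by
      have := hD _ hd _ (hxC k)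
      gcongr
    have h2 := mul_le_mul_of_nonneg_left htD ht0.le
    linarith
  have hlin : β k * φ (x k) (t • u) ≤ -(t * (βlo * η)) := by
    have h1 : φ (x k) (t • u) ≤ -(t * η) := by
      have := mul_le_mul_of_nonneg_left hi1.le ht0.le
      linarith
    have h2 := mul_le_mul_of_nonneg_left h1 (hβk k).le
    have h3 := mul_le_mul_of_nonneg_right (hβ k).1 (mul_pos ht0 hη).le
    linarith
  have hup : (1 - δ) * θ (β k) (x k) ≤ -((1 - δ) * (t * (βlo * η) / 2)) := by
    have := mul_le_mul_of_nonneg_left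
      (hθle.trans (by linarith : _ ≤ -(t * (βlo * η) / 2))) hδ1.le
    linarith
  have hlow : -(βhi * ‖fderiv ℝ F (x k) (v k)‖) ≤ β k * φ (x k) (v k) := by
    have h1 := mul_le_mul_of_nonneg_left (hφJ k) (hβk k).le
    have h2 := mul_le_mul_of_nonneg_right (hβ k).2 (norm_nonneg (fderiv ℝ F (x k) (v k)))
    linarith
  rw [lt_div_iff₀ hβhi] at hi2
  have := hvapprox k
  have := sq_nonneg ‖v k‖
  linarith
end

section
/- Let C be a nonempty, closed, convex subset of ℝⁿ, let F : ℝⁿ → ℝᵐ be continuously differentiable with Jacobian J_F, and for each x let K(x) ⊆ ℝᵐ be a closed, pointed, convex cone with nonempty interior, with G(x) a compact subset of K*(x) ∩ S(0,1). Assume F is K-convex on C and satisfies the gradient inclusion F(x) − F(x̄) ∈ J_F(x̄)(x − x̄) + K(x̄) for all x, x̄ ∈ C. Suppose at iteration k: w^k ∈ conv(G(x^k)), v^k = P_{C − x^k}(−β_k J_F(x^k)ᵀ w^k) with β_k > 0, J_F(x^k)v^k ∈ −int(K(x^k)), γ_k ∈ (0,1], and x^{k+1} = x^k + γ_k v^k.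 If x̂ ∈ C satisfies F(x̂) − F(x^k) ∈ −K(x^k), then ‖x^{k+1} − x̂‖² ≤ ‖x^k − x̂‖² + 2β_kγ_k|⟨w^k, J_F(x^k)v^k⟩|. -/
/-!
Write `g = J_F(x^k)ᵀ w^k` and `d = x̂ − x^k`. The obtuse-angle characterization of the projection
(`inner_add_nonneg_of_proj`) gives `⟪v + β g, d − v⟫ ≥ 0`. Every element of `conv(G(x^k))` is
nonnegative on `K(x^k)` (`inner_nonneg_of_mem_convexHull`), so the gradient inclusion and
`F(x̂) − F(x^k) ∈ −K(x^k)` force `⟪g, d⟫ ≤ 0`. Together these yield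
`⟪v, d⟫ ≥ ‖v‖² − β |⟪w, J v⟫|`; expanding `‖γ v − d‖²` leaves the term `(γ² − 2γ)‖v‖²`, which is
nonpositive because `0 < γ ≤ 1`.
-/

open scoped Pointwise RealInnerProductSpace

theorem inner_nonneg_of_mem_convexHull {E : Type*} [NormedAddCommGroup E] [InnerProductSpace ℝ E]
    {G : Set E} {y : E} (hG : ∀ w ∈ G, 0 ≤ ⟪w, y⟫) {w : E} (hw : w ∈ convexHull ℝ G) :
    0 ≤ ⟪w, y⟫ := by
  have hconv : Convex ℝ {w : E | 0 ≤ ⟪w, y⟫} := by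
    intro a ha b hb s t hs ht _
    simp only [Set.mem_ofPred_eq] at ha hb ⊢
    rw [inner_add_left, real_inner_smul_left, real_inner_smul_left]
    positivity
  exact convexHull_min hG hconv hw

/-- Variational inequality for `v = P_{C − x}(−p)`, with the projection expressed as a nearest
point. -/
theorem inner_add_nonneg_of_proj {E : Type*} [NormedAddCommGroup E] [InnerProductSpace ℝ E]
    {C : Set E} (hC : Convex ℝ C) {x v p : E} (hv : x + v ∈ C)
    (hmin : ∀ u, x + u ∈ C → ‖v - -p‖ ≤ ‖u - -p‖) {y : E} (hy : y ∈ C) :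
    0 ≤ ⟪v + p, y - x - v⟫ := by
  -- `x + v` is the point of `C` nearest to `x - p`.
  have hinf : ‖(x - p) - (x + v)‖ = ⨅ z : C, ‖(x - p) - z‖ := by
    have : Nonempty C := ⟨⟨x + v, hv⟩⟩
    refine le_antisymm (le_ciInf fun z => ?_)
      (ciInf_le ⟨0, by rintro _ ⟨z, rfl⟩; exact norm_nonneg _⟩ (⟨x + v, hv⟩ : C))
    have h := hmin (z - x) (by simp)
    rw [norm_sub_rev (x - p) (x + v), norm_sub_rev (x - p) (z : E)]
    have e₁ : x + v - (x - p) = v - -p := by abel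
    have e₂ : (z : E) - (x - p) = z - x - -p := by abel
    rwa [e₁, e₂]
  have h := (norm_eq_iInf_iff_real_inner_le_zero hC hv).1 hinf y hy
  have e₁ : (x - p) - (x + v) = -(v + p) := by abel
  have e₂ : y - (x + v) = y - x - v := by abel
  rw [e₁, e₂, inner_neg_left] at h
  linarith

/-- (Fejér-type inequality) For a `K`-convex `F` with the gradient
inclusion, if `v^k = P_{C−x^k}(−β_k J_F(x^k)ᵀ w^k)` is an s-compatible descent
direction, `x^{k+1} = x^k + γ_k v^k` with `γ_k ∈ (0,1]`, and `x̂ ∈ C` satisfies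
`F(x̂) − F(x^k) ∈ −K(x^k)`, then
`‖x^{k+1} − x̂‖² ≤ ‖x^k − x̂‖² + 2β_kγ_k|⟨w^k, J_F(x^k)v^k⟩|`. -/
theorem stmt_17 {n m : ℕ}
    (C : Set (EuclideanSpace ℝ (Fin n)))
    (hCne : C.Nonempty) (hCcl : IsClosed C) (hCconv : Convex ℝ C)
    (F : EuclideanSpace ℝ (Fin n) → EuclideanSpace ℝ (Fin m))
    (hF : ContDiff ℝ 1 F)
    (K : EuclideanSpace ℝ (Fin n) → Set (EuclideanSpace ℝ (Fin m)))
    (hKcl : ∀ x, IsClosed (K x))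
    (hKcone : ∀ x, ∀ c : ℝ, 0 ≤ c → ∀ y ∈ K x, c • y ∈ K x)
    (hKconv : ∀ x, Convex ℝ (K x))
    (hKpointed : ∀ x, ∀ y, y ∈ K x → -y ∈ K x → y = 0)
    (hKint : ∀ x, (interior (K x)).Nonempty)
    (Kdual : EuclideanSpace ℝ (Fin n) → Set (EuclideanSpace ℝ (Fin m)))
    (hKdual : ∀ x, Kdual x = {w | ∀ y ∈ K x, 0 ≤ ⟪w, y⟫})
    (G : EuclideanSpace ℝ (Fin n) → Set (EuclideanSpace ℝ (Fin m)))
    (hGcompact : ∀ x, IsCompact (G x))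
    (hGsub : ∀ x, G x ⊆ Kdual x ∩ Metric.sphere (0 : EuclideanSpace ℝ (Fin m)) 1)
    (hKconvexF : ∀ lam : ℝ, lam ∈ Set.Icc (0 : ℝ) 1 → ∀ x ∈ C, ∀ xb ∈ C,
      ∃ k ∈ K (lam • x + (1 - lam) • xb),
        F (lam • x + (1 - lam) • xb) = lam • F x + (1 - lam) • F xb - k)
    (hGradIncl : ∀ x ∈ C, ∀ xb ∈ C,
      F x - F xb - fderiv ℝ F xb (x - xb) ∈ K xb)
    (xk : EuclideanSpace ℝ (Fin n)) (hxk : xk ∈ C)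
    (wk : EuclideanSpace ℝ (Fin m)) (hwk : wk ∈ convexHull ℝ (G xk))
    (βk : ℝ) (hβk : 0 < βk)
    (vk : EuclideanSpace ℝ (Fin n))
    -- vk is the orthogonal projection of −βk J_F(xk)ᵀ wk onto C − xk
    (hvfeas : xk + vk ∈ C)
    (hvproj : ∀ u : EuclideanSpace ℝ (Fin n), xk + u ∈ C →
      ‖vk - (-βk • (ContinuousLinearMap.adjoint (fderiv ℝ F xk)) wk)‖ ≤
        ‖u - (-βk • (ContinuousLinearMap.adjoint (fderiv ℝ F xk)) wk)‖)
    (hdescent : fderiv ℝ F xk vk ∈ -interior (K xk))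
    (γk : ℝ) (hγk : γk ∈ Set.Ioc (0 : ℝ) 1)
    (xk1 : EuclideanSpace ℝ (Fin n)) (hupdate : xk1 = xk + γk • vk)
    (xh : EuclideanSpace ℝ (Fin n)) (hxh : xh ∈ C)
    (hdom : F xh - F xk ∈ -K xk) :
    ‖xk1 - xh‖ ^ 2 ≤ ‖xk - xh‖ ^ 2 +
      2 * βk * γk * |⟪wk, fderiv ℝ F xk vk⟫| := by
  set J := fderiv ℝ F xk with hJ
  obtain ⟨hγ0, hγ1⟩ := hγk
  have hw : ∀ y ∈ K xk, 0 ≤ ⟪wk, y⟫ := fun y hy =>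
    inner_nonneg_of_mem_convexHull (fun w hwG => by
      have := (hGsub xk hwG).1
      rw [hKdual] at this
      exact this y hy) hwk
  have hJd : ⟪wk, J (xh - xk)⟫ ≤ 0 := by
    have h₁ := hw _ (hGradIncl xh hxh xk hxk)
    have h₂ := hw _ (Set.mem_neg.1 hdom)
    rw [inner_sub_right] at h₁
    rw [inner_neg_right] at h₂
    linarith
  have hproj : 0 ≤ ⟪vk + βk • ContinuousLinearMap.adjoint J wk, xh - xk - vk⟫ :=
    inner_add_nonneg_of_proj hCconv hvfeas (by simpa only [neg_smul] using hvproj) hxh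
  rw [inner_add_left, real_inner_smul_left, ContinuousLinearMap.adjoint_inner_left, map_sub J _ vk,
    inner_sub_right vk _ vk, inner_sub_right wk, real_inner_self_eq_norm_sq] at hproj
  have habs := neg_abs_le ⟪wk, J vk⟫
  have hkey : ‖vk‖ ^ 2 - βk * |⟪wk, J vk⟫| ≤ ⟪vk, xh - xk⟫ := by
    have h₁ := mul_le_mul_of_nonneg_left hJd hβk.le
    have h₂ := mul_le_mul_of_nonneg_left habs hβk.le
    linarith
  have hexp : ‖xk1 - xh‖ ^ 2 =
      γk ^ 2 * ‖vk‖ ^ 2 - 2 * γk * ⟪vk, xh - xk⟫ + ‖xk - xh‖ ^ 2 := by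
    have e : xk1 - xh = γk • vk - (xh - xk) := by rw [hupdate]; abel
    rw [e, norm_sub_sq_real, norm_smul, mul_pow, Real.norm_eq_abs, sq_abs, real_inner_smul_left,
      norm_sub_rev xh xk]
    ring
  have h₁ := mul_le_mul_of_nonneg_left hkey hγ0.le
  have h₂ : 0 ≤ γk * (2 - γk) * ‖vk‖ ^ 2 :=
    mul_nonneg (mul_nonneg hγ0.le (by linarith)) (sq_nonneg _)
  rw [hexp]
  linarith
end

section
/- Let C be a nonempty, closed, convex subset of ℝⁿ, let F : ℝⁿ → ℝᵐ be continuously differentiable with Jacobian J_F, and let K̂ assign to each y ∈ ℝᵐ a closed, pointed, convex cone K̂(y) ⊆ ℝᵐ with nonempty interior. If x* ∈ C is a weak solution of the problem K̂-min F(x) subject to x ∈ C (i.e., for all x ∈ C, F(x) − F(x*) ∉ −int(K̂(F(x*)))), then x* is a stationary point (i.e., for all d ∈ C − x*, J_F(x*)d ∉ −int(K̂(F(x*)))). Moreover, if additionally F is K̂-convex on C with the gradient inclusion F(x) − F(x̄) ∈ J_F(x̄)(x − x̄) + K̂(F(x̄)) for all x, x̄ ∈ C, then every stationary point is a weak solution.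 -/
/-!
If `x* + d ∈ C` and `J_F(x*) d` lies in the open set `-int K`, where `K = K̂(F(x*))`, then so does the
difference quotient `t⁻¹ (F(x* + t d) - F(x*))` for some `t ∈ (0, 1]`. Since `int K` is stable under
positive scaling (`smul_mem_interior_cone`) and `x* + t d ∈ C` by convexity, `x*` is not a weak
solution. Conversely, if `F x - F x* ∈ -int K`, then the gradient inclusion gives
`J_F(x*)(x - x*) ∈ -int K - K ⊆ -int K` by `add_mem_interior_cone`, so `x*` is not stationary.
-/

open scoped Pointwise RealInnerProductSpace

theorem smul_mem_interior_cone {E : Type*} [NormedAddCommGroup E] [NormedSpace ℝ E] {K : Set E}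
    (hcone : ∀ c : ℝ, 0 ≤ c → ∀ z ∈ K, c • z ∈ K) {t : ℝ} (ht : 0 < t) {z : E}
    (hz : z ∈ interior K) : t • z ∈ interior K := by
  have hsub : t • K ⊆ K := by
    rintro _ ⟨w, hw, rfl⟩
    exact hcone t ht.le w hw
  apply interior_mono hsub
  rw [interior_smul₀ ht.ne']
  exact Set.smul_mem_smul_set hz

theorem add_mem_interior_cone {E : Type*} [NormedAddCommGroup E] [NormedSpace ℝ E] {K : Set E}
    (hcone : ∀ c : ℝ, 0 ≤ c → ∀ z ∈ K, c • z ∈ K) (hconv : Convex ℝ K) {a b : E}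
    (ha : a ∈ interior K) (hb : b ∈ K) : a + b ∈ interior K := by
  have hsub : K + K ⊆ K := by
    rintro _ ⟨u, hu, v, hv, rfl⟩
    -- `u + v` is twice the midpoint of `u` and `v`.
    have hmid : (1 / 2 : ℝ) • u + (1 / 2 : ℝ) • v ∈ K :=
      hconv hu hv (by norm_num) (by norm_num) (by norm_num)
    have h2 := hcone 2 (by norm_num) _ hmid
    rw [smul_add, smul_smul, smul_smul] at h2
    norm_num at h2
    exact h2
  exact interior_mono hsub (subset_interior_add_left (Set.add_mem_add ha hb))

/-- For the variable order given by `K̂ ∘ F`: weak solutions of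
`K̂-min F(x), x ∈ C` are stationary points; and if moreover `F` is `K̂`-convex
with the gradient inclusion, every stationary point is a weak solution. -/
theorem stmt_19 {n m : ℕ}
    (C : Set (EuclideanSpace ℝ (Fin n)))
    (hCne : C.Nonempty) (hCcl : IsClosed C) (hCconv : Convex ℝ C)
    (F : EuclideanSpace ℝ (Fin n) → EuclideanSpace ℝ (Fin m))
    (hF : ContDiff ℝ 1 F)
    (Kh : EuclideanSpace ℝ (Fin m) → Set (EuclideanSpace ℝ (Fin m)))
    (hKcl : ∀ y, IsClosed (Kh y))
    (hKcone : ∀ y, ∀ c : ℝ, 0 ≤ c → ∀ z ∈ Kh y, c • z ∈ Kh y)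
    (hKconv : ∀ y, Convex ℝ (Kh y))
    (hKpointed : ∀ y, ∀ z, z ∈ Kh y → -z ∈ Kh y → z = 0)
    (hKint : ∀ y, (interior (Kh y)).Nonempty)
    (xs : EuclideanSpace ℝ (Fin n)) (hxs : xs ∈ C) :
    ((∀ x ∈ C, F x - F xs ∉ -interior (Kh (F xs))) →
      ∀ d : EuclideanSpace ℝ (Fin n), xs + d ∈ C →
        fderiv ℝ F xs d ∉ -interior (Kh (F xs))) ∧
    (((∀ lam : ℝ, lam ∈ Set.Icc (0 : ℝ) 1 → ∀ x ∈ C, ∀ xb ∈ C,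
        ∃ k ∈ Kh (F (lam • x + (1 - lam) • xb)),
          F (lam • x + (1 - lam) • xb) = lam • F x + (1 - lam) • F xb - k) ∧
      (∀ x ∈ C, ∀ xb ∈ C,
        F x - F xb - fderiv ℝ F xb (x - xb) ∈ Kh (F xb))) →
      (∀ d : EuclideanSpace ℝ (Fin n), xs + d ∈ C →
        fderiv ℝ F xs d ∉ -interior (Kh (F xs))) →
      ∀ x ∈ C, F x - F xs ∉ -interior (Kh (F xs))) := by
  constructor
  · intro hweak d hd hmem
    have hlim := ((hF.differentiable (by norm_num) xs).hasFDerivAt.hasLineDerivAt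
      d).tendsto_slope_zero_right
    have hev := hlim.eventually (isOpen_interior.neg.mem_nhds hmem)
    have hIoc : Set.Ioc (0 : ℝ) 1 ∈ nhdsWithin (0 : ℝ) (Set.Ioi 0) :=
      Ioc_mem_nhdsGT one_pos
    obtain ⟨t, ht, ht0, ht1⟩ := (hev.and hIoc).exists
    have htC : xs + t • d ∈ C := hCconv.add_smul_mem hxs hd ⟨ht0.le, ht1⟩
    apply hweak _ htC
    have h := smul_mem_interior_cone (hKcone (F xs)) ht0 (Set.mem_neg.mp ht)
    rw [smul_neg, smul_inv_smul₀ ht0.ne'] at h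
    exact h
  · rintro ⟨-, hgrad⟩ hstat x hx hmem
    apply hstat (x - xs) (by rwa [add_sub_cancel])
    have h := add_mem_interior_cone (hKcone (F xs)) (hKconv (F xs)) (Set.mem_neg.mp hmem)
      (hgrad x hx xs hxs)
    rw [Set.mem_neg]
    convert h using 1
    abel
end
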